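/- Let q be an even prime power with q ≥ 2048, and let K be a complete k-cap in PG(4, q) with k ≥ q³ − 2q² + 3q√q + 8q − 9√q − 6. Then no plane of PG(4, q) meets K in exactly q points. -/

import Mathlib

open Module

/-- Points of the projective space `PG(n, q)` over the field `F` (with `q = |F|`). -/
abbrev PGPoint (F : Type*) [Field F] (n : ℕ) := Projectivization F (Fin (n + 1) → F)

/-- The set of projective points lying in the projective subspace determined by
a linear subspace `W`. -/
def ptsIn {F : Type*} [Field F] {n : ℕ} (W : Submodule F (Fin (n + 1) → F)) :
    Set (PGPoint F n) := {P | P.submodule ≤ W}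

/-- Three points of `PG(n, q)` are collinear if they lie on a common line. -/
def Coll3 {F : Type*} [Field F] {n : ℕ} (P₁ P₂ P₃ : PGPoint F n) : Prop :=
  Module.finrank F ↥(P₁.submodule ⊔ P₂.submodule ⊔ P₃.submodule) ≤ 2

/-- A cap (a plane arc when `n = 2`): a set of points no three of which are collinear. -/
def IsCap {F : Type*} [Field F] {n : ℕ} (K : Set (PGPoint F n)) : Prop :=
  ∀ P₁ ∈ K, ∀ P₂ ∈ K, ∀ P₃ ∈ K, P₁ ≠ P₂ → P₁ ≠ P₃ → P₂ ≠ P₃ → ¬ Coll3 P₁ P₂ P₃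

/-- A complete cap: a cap that is not contained in a cap with one more point. -/
def IsCompleteCap {F : Type*} [Field F] {n : ℕ} (K : Set (PGPoint F n)) : Prop :=
  IsCap K ∧ ∀ P ∉ K, ¬ IsCap (insert P K)

/-- A tangent line of `K`: a line (2-dimensional linear subspace) meeting `K`
in exactly one point. -/
def IsTangent {F : Type*} [Field F] {n : ℕ} (K : Set (PGPoint F n))
    (W : Submodule F (Fin (n + 1) → F)) : Prop :=
  Module.finrank F W = 2 ∧ (ptsIn W ∩ K).ncard = 1

/-!
Let `N` be a point on a chord of a cap `C`. In every plane through that chord, Segre's lemma of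
tangents bounds the size of the arc cut out by `C` plus the number of its points that `N` sees along
a tangent by `q + 2`; summing over the planes bounds the corresponding number for `C`.

Let first `C` be a complete cap of a solid with at least `q² - 2q + 22` points. Applying the bound
to every point of a tangent at `P` gives a sum-of-squares inequality in the linear space formed by
the tangents at `P` and the planes through `P`. It forces the tangents at `P` into one full pencil,
or into two planes with at least `2q` tangents in all. In the second case every point is of the same
type, and counting incident pairs of a point and a plane with `q + 1` or `q + 2` points gives a
divisibility that fails. In the first case no plane contains exactly two tangents at `P`, so no
plane meets `C` in exactly `q` points.

Now let a plane `p` meet the cap in `PG(4, q)` in `q` points. A solid through `p` with at least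
`q² - 2q + 22` points of the cap then does not carry a complete cap with the same trace on `p`, so
some new point `N` of `p` sees the trace of the solid along tangents. There are at most `4` such
points `N`, and by the bound each of them serves at most two solids. Hence at most `8` of the
`q + 1` solids through `p` are this large, and the cap is too small.
-/

namespace ProjectiveCap

open Finset

section Subspaces

variable {F V : Type*} [Field F] [AddCommGroup V] [Module F V] [FiniteDimensional F V]
variable {U X Y D P Q R : Submodule F V} {n : ℕ}

theorem eq_of_le_of_finrank_eq_one (hP : finrank F P = 1) (hQ : finrank F Q = 1) (h : P ≤ Q) :
    P = Q :=
  Submodule.eq_of_le_of_finrank_eq h (hP.trans hQ.symm)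

theorem finrank_sup_of_not_le (hP : finrank F P = 1) (h : ¬P ≤ U) :
    finrank F ↥(U ⊔ P) = finrank F U + 1 := by
  have lower : finrank F U < finrank F ↥(U ⊔ P) :=
    Submodule.finrank_lt_finrank_of_lt (left_lt_sup.2 h)
  have upper := Submodule.finrank_add_le_finrank_add_finrank U P
  omega

theorem finrank_sup_of_ne (hP : finrank F P = 1) (hQ : finrank F Q = 1) (h : P ≠ Q) :
    finrank F ↥(P ⊔ Q) = 2 := by
  rw [finrank_sup_of_not_le hQ fun hle => h (eq_of_le_of_finrank_eq_one hQ hP hle).symm, hP]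

theorem sup_eq_of_not_le (hUX : U ≤ X) (hX : finrank F X = finrank F U + 1) (hPX : P ≤ X)
    (h : ¬P ≤ U) : U ⊔ P = X := by
  refine Submodule.eq_of_le_of_finrank_le (sup_le hUX hPX) ?_
  have := Submodule.finrank_lt_finrank_of_lt (left_lt_sup.2 h)
  omega

theorem sup_eq_of_ne (hP : finrank F P = 1) (hQ : finrank F Q = 1) (h : P ≠ Q)
    (hX : finrank F X = 2) (hPX : P ≤ X) (hQX : Q ≤ X) : P ⊔ Q = X :=
  sup_eq_of_not_le hPX (by omega) hQX fun hle => h (eq_of_le_of_finrank_eq_one hQ hP hle).symm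

theorem le_sup_exchange (hP : finrank F P = 1) (hQ : finrank F Q = 1) (hR : finrank F R = 1)
    (hPR : P ≠ R) (h : R ≤ P ⊔ Q) : Q ≤ P ⊔ R := by
  have hPQ : P ≠ Q := by
    rintro rfl
    exact hPR (eq_of_le_of_finrank_eq_one hR hP (by simpa using h)).symm
  exact (sup_eq_of_ne hP hR hPR (finrank_sup_of_ne hP hQ hPQ) le_sup_left h).symm ▸ le_sup_right

theorem finrank_inf_of_ne (hXD : X ≤ D) (hYD : Y ≤ D) (hX : finrank F X = n + 1)
    (hY : finrank F Y = n + 1) (hD : finrank F D = n + 2) (h : X ≠ Y) :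
    finrank F ↥(X ⊓ Y) = n := by
  have modular := Submodule.finrank_sup_add_finrank_inf_eq X Y
  have upper := Submodule.finrank_mono (sup_le hXD hYD)
  have lower : finrank F ↥(X ⊓ Y) < finrank F X := by
    refine Submodule.finrank_lt_finrank_of_lt (inf_le_left.lt_of_ne fun he => h ?_)
    exact Submodule.eq_of_le_of_finrank_eq (inf_eq_left.1 he) (hX.trans hY.symm)
  omega

theorem finrank_sup_of_ne_of_le (hUX : U ≤ X) (hUY : U ≤ Y) (hU : finrank F U = n)
    (hX : finrank F X = n + 1) (hY : finrank F Y = n + 1) (h : X ≠ Y) :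
    finrank F ↥(X ⊔ Y) = n + 2 := by
  have modular := Submodule.finrank_sup_add_finrank_inf_eq X Y
  have lower := Submodule.finrank_mono (le_inf hUX hUY)
  have upper : finrank F ↥(X ⊓ Y) < finrank F X := by
    refine Submodule.finrank_lt_finrank_of_lt (inf_le_left.lt_of_ne fun he => h ?_)
    exact Submodule.eq_of_le_of_finrank_eq (inf_eq_left.1 he) (hX.trans hY.symm)
  omega

end Subspaces

section Trace

variable {α : Type*} [LE α] {S T : Finset α} {a b x : α}

open Classical in
/-- The trace of a finite set `S` of points on a block `a`: the members of `S` below `a`. -/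
noncomputable def trace (S : Finset α) (a : α) : Finset α := S.filter (· ≤ a)

@[simp]
theorem mem_trace : x ∈ trace S a ↔ x ∈ S ∧ x ≤ a := by simp [trace]

theorem trace_subset : trace S a ⊆ S := fun _ hx => (mem_trace.1 hx).1

theorem trace_mono_left (h : S ⊆ T) : trace S a ⊆ trace T a := fun _ hx =>
  mem_trace.2 ⟨h (mem_trace.1 hx).1, (mem_trace.1 hx).2⟩

end Trace

theorem trace_mono_right {α : Type*} [Preorder α] {S : Finset α} {a b : α} (h : a ≤ b) :
    trace S a ⊆ trace S b :=
  fun _ hx => mem_trace.2 ⟨(mem_trace.1 hx).1, (mem_trace.1 hx).2.trans h⟩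

section Flats

variable {F V : Type*} [Field F] [AddCommGroup V] [Module F V] [Finite V]
variable {U W X P : Submodule F V} {n r : ℕ} {S : Finset (Submodule F V)}

/-- The `n`-dimensional subspaces between `U` and `W`. Dimensions are those of linear algebra, so
`n = 1, 2, 3, 4` gives the points, lines, planes and solids of the projective space. -/
noncomputable def flats (U W : Submodule F V) (n : ℕ) : Finset (Submodule F V) :=
  (Set.toFinite {X : Submodule F V | U ≤ X ∧ X ≤ W ∧ finrank F X = n}).toFinset

@[simp]
theorem mem_flats : X ∈ flats U W n ↔ U ≤ X ∧ X ≤ W ∧ finrank F X = n := by simp [flats]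

theorem sup_mem_flats (hP : finrank F P = 1) (hUW : U ≤ W) (hPW : P ≤ W) (h : ¬P ≤ U) :
    U ⊔ P ∈ flats U W (finrank F U + 1) :=
  mem_flats.2 ⟨le_sup_left, sup_le hUW hPW, finrank_sup_of_not_le hP h⟩

theorem sum_flats_sum_trace_sdiff [DecidableEq (Submodule F V)] (hS : ∀ P ∈ S, finrank F P = 1)
    (hUW : U ≤ W) (hU : finrank F U = r) (w : Submodule F V → ℕ) :
    ∑ X ∈ flats U W (r + 1), ∑ P ∈ trace S X \ trace S U, w P =
      ∑ P ∈ trace S W \ trace S U, w P := by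
  have hmaps : ∀ P ∈ trace S W \ trace S U, U ⊔ P ∈ flats U W (r + 1) := by
    intro P hP
    simp only [mem_sdiff, mem_trace, not_and] at hP
    exact hU ▸ sup_mem_flats (hS P hP.1.1) hUW hP.1.2 (hP.2 hP.1.1)
  rw [← sum_fiberwise_of_maps_to hmaps]
  refine sum_congr rfl fun X hX => sum_congr ?_ fun _ _ => rfl
  obtain ⟨hUX, hXW, hXr⟩ := mem_flats.1 hX
  ext P
  simp only [mem_sdiff, mem_trace, mem_filter, not_and]
  constructor
  · rintro ⟨⟨hP, hPX⟩, hPU⟩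
    exact ⟨⟨⟨hP, hPX.trans hXW⟩, hPU⟩, sup_eq_of_not_le hUX (by rw [hXr, hU]) hPX (hPU hP)⟩
  · rintro ⟨⟨⟨hP, -⟩, hPU⟩, rfl⟩
    exact ⟨⟨hP, le_sup_right⟩, hPU⟩

theorem sum_flats_sum_trace (hS : ∀ P ∈ S, finrank F P = 1) (hUW : U ≤ W) (hU : finrank F U = r)
    (w : Submodule F V → ℕ) :
    ∑ X ∈ flats U W (r + 1), ∑ P ∈ trace S X, w P + ∑ P ∈ trace S U, w P =
      ∑ P ∈ trace S W, w P + #(flats U W (r + 1)) * ∑ P ∈ trace S U, w P := by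
  classical
  have split : ∀ X ∈ flats U W (r + 1), ∑ P ∈ trace S X, w P =
      ∑ P ∈ trace S X \ trace S U, w P + ∑ P ∈ trace S U, w P := fun X hX =>
    (sum_sdiff (trace_mono_right (mem_flats.1 hX).1)).symm
  rw [sum_congr rfl split, sum_add_distrib, sum_flats_sum_trace_sdiff hS hUW hU,
    ← sum_sdiff (trace_mono_right (S := S) hUW), sum_const, smul_eq_mul]
  ring

theorem sum_flats_card_trace (hS : ∀ P ∈ S, finrank F P = 1) (hUW : U ≤ W)
    (hU : finrank F U = r) :
    ∑ X ∈ flats U W (r + 1), #(trace S X) + #(trace S U) =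
      #(trace S W) + #(flats U W (r + 1)) * #(trace S U) := by
  simpa only [card_eq_sum_ones] using sum_flats_sum_trace hS hUW hU fun _ => 1

theorem card_mul_add_card_trace_le {G : Finset (Submodule F V)} {m : ℕ}
    (hS : ∀ P ∈ S, finrank F P = 1) (hUW : U ≤ W) (hU : finrank F U = r)
    (hG : G ⊆ flats U W (r + 1)) (hm : ∀ X ∈ G, m + #(trace S U) ≤ #(trace S X)) :
    #G * m + #(trace S U) ≤ #(trace S W) := by
  classical
  have hsdiff : ∀ X ∈ G, m ≤ ∑ P ∈ trace S X \ trace S U, 1 := by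
    intro X hX
    have := hm X hX
    rw [← card_eq_sum_ones, card_sdiff_of_subset (trace_mono_right (mem_flats.1 (hG hX)).1)]
    omega
  have hsum : #G * m ≤ #(trace S W \ trace S U) :=
    calc #G * m ≤ ∑ X ∈ G, ∑ P ∈ trace S X \ trace S U, 1 := card_nsmul_le_sum _ _ _ hsdiff
      _ ≤ ∑ X ∈ flats U W (r + 1), ∑ P ∈ trace S X \ trace S U, 1 := sum_le_sum_of_subset hG
      _ = #(trace S W \ trace S U) := by
        rw [sum_flats_sum_trace_sdiff hS hUW hU, card_eq_sum_ones]
  have := card_sdiff_add_card_eq_card (trace_mono_right (S := S) hUW)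
  omega

variable [Fintype F]

local notation "q" => Fintype.card F

theorem card_flats_bot_one (W : Submodule F V) :
    #(flats ⊥ W 1) = ∑ i ∈ range (finrank F W), q ^ i := by
  have e : {X // X ∈ flats ⊥ W 1} ≃ {H : Submodule F W // finrank F H = 1} :=
    { toFun := fun X => ⟨Submodule.comap W.subtype X.1, by
        have hX := mem_flats.1 X.2
        rw [(Submodule.comapSubtypeEquivOfLe hX.2.1).finrank_eq, hX.2.2]⟩
      invFun := fun H => ⟨H.1.map W.subtype, mem_flats.2
        ⟨bot_le, W.map_subtype_le _, by rw [W.finrank_map_subtype_eq, H.2]⟩⟩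
      left_inv := fun X => Subtype.ext <| by
        simpa only [Submodule.map_comap_subtype, inf_eq_right] using (mem_flats.1 X.2).2.1
      right_inv := fun H => Subtype.ext <|
        Submodule.comap_map_eq_of_injective W.injective_subtype _ }
  rw [← Nat.card_eq_fintype_card, ← Projectivization.card_of_finrank F W rfl,
    Nat.card_congr (Projectivization.equivSubmodule F W), ← Nat.card_congr e,
    Nat.card_eq_fintype_card, Fintype.card_coe]

theorem card_flats (hUW : U ≤ W) (hU : finrank F U = r) (hW : finrank F W = r + n) :
    #(flats U W (r + 1)) = ∑ i ∈ range n, q ^ i := by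
  have trace_points : ∀ {X}, X ≤ W → trace (flats ⊥ W 1) X = flats ⊥ X 1 := by
    intro X hX
    ext P
    simp only [mem_trace, mem_flats, bot_le, true_and]
    exact ⟨fun h => ⟨h.2, h.1.2⟩, fun h => ⟨⟨h.1.trans hX, h.2⟩, h.1⟩⟩
  have count := sum_flats_card_trace (S := flats ⊥ W 1) (fun P hP => (mem_flats.1 hP).2.2) hUW hU
  have hsum : ∑ X ∈ flats U W (r + 1), #(trace (flats ⊥ W 1) X) =
      #(flats U W (r + 1)) * (∑ i ∈ range r, q ^ i + q ^ r) := by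
    refine sum_const_nat fun X hX => ?_
    obtain ⟨-, hXW, hXr⟩ := mem_flats.1 hX
    rw [trace_points hXW, card_flats_bot_one, hXr, sum_range_succ]
  have hq : 0 < q ^ r := pow_pos Fintype.card_pos r
  rw [hsum, trace_points hUW, trace_points le_rfl, card_flats_bot_one, card_flats_bot_one, hU, hW,
    sum_range_add, mul_add] at count
  simp only [pow_add, ← mul_sum] at count
  refine Nat.eq_of_mul_eq_mul_right hq ?_
  linarith

theorem card_flats_of_finrank_add_two (hUW : U ≤ W) (hU : finrank F U = r)
    (hW : finrank F W = r + 2) : #(flats U W (r + 1)) = q + 1 := by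
  rw [card_flats hUW hU hW]
  simp [sum_range_succ, add_comm]

theorem card_flats_of_finrank_add_three (hUW : U ≤ W) (hU : finrank F U = r)
    (hW : finrank F W = r + 3) : #(flats U W (r + 1)) = q ^ 2 + q + 1 := by
  rw [card_flats hUW hU hW]
  simp only [sum_range_succ, sum_range_zero]
  ring

end Flats

section Caps

variable {F V : Type*} [Field F] [AddCommGroup V] [Module F V]
variable {C C' : Finset (Submodule F V)} {A B N P Q R W l : Submodule F V}

/-- A cap, given by the finite set of the one-dimensional subspaces that are its points: no three
of them lie on a line. In a plane, this is an arc. -/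
structure IsPointCap (C : Finset (Submodule F V)) : Prop where
  finrank_eq_one : ∀ P ∈ C, finrank F P = 1
  not_le_sup : ∀ P ∈ C, ∀ Q ∈ C, ∀ R ∈ C, P ≠ Q → P ≠ R → Q ≠ R → ¬R ≤ P ⊔ Q

/-- The point `N` lies off `C`, on the chord joining the points `A` and `B` of `C`. -/
structure OnChord (C : Finset (Submodule F V)) (A B N : Submodule F V) : Prop where
  left_mem : A ∈ C
  right_mem : B ∈ C
  ne : A ≠ B
  finrank_eq_one : finrank F N = 1
  notMem : N ∉ C
  le_sup : N ≤ A ⊔ B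

open Classical in
/-- The points of `C` which `N` sees along a tangent, that is, the points `P` of `C` for which
`P ⊔ N` has no further point of `C`. -/
noncomputable def tangentPoints (C : Finset (Submodule F V)) (N : Submodule F V) :
    Finset (Submodule F V) :=
  C.filter fun P => ∀ R ∈ C, R ≤ P ⊔ N → R = P

theorem mem_tangentPoints : P ∈ tangentPoints C N ↔ P ∈ C ∧ ∀ R ∈ C, R ≤ P ⊔ N → R = P := by
  simp [tangentPoints]

theorem tangentPoints_subset : tangentPoints C N ⊆ C := fun _ hP => (mem_tangentPoints.1 hP).1

theorem IsPointCap.mono (hC : IsPointCap C) (h : C' ⊆ C) : IsPointCap C' :=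
  ⟨fun P hP => hC.finrank_eq_one P (h hP),
    fun P hP Q hQ R hR => hC.not_le_sup P (h hP) Q (h hQ) R (h hR)⟩

theorem OnChord.symm (h : OnChord C A B N) : OnChord C B A N :=
  ⟨h.right_mem, h.left_mem, h.ne.symm, h.finrank_eq_one, h.notMem, sup_comm A B ▸ h.le_sup⟩

theorem IsPointCap.trace_sup [DecidableEq (Submodule F V)] (hC : IsPointCap C) (hP : P ∈ C)
    (hQ : Q ∈ C) (h : P ≠ Q) : trace C (P ⊔ Q) = {P, Q} := by
  ext R
  rw [mem_trace, mem_insert, mem_singleton]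
  constructor
  · rintro ⟨hR, hle⟩
    by_contra! hne
    exact hC.not_le_sup P hP Q hQ R hR h hne.1.symm hne.2.symm hle
  · rintro (rfl | rfl)
    exacts [⟨hP, le_sup_left⟩, ⟨hQ, le_sup_right⟩]

theorem IsPointCap.card_trace_sup (hC : IsPointCap C) (hP : P ∈ C) (hQ : Q ∈ C) (h : P ≠ Q) :
    #(trace C (P ⊔ Q)) = 2 := by
  classical rw [hC.trace_sup hP hQ h, card_pair h]

theorem OnChord.ne_left (h : OnChord C A B N) : N ≠ A := fun he => h.notMem (he ▸ h.left_mem)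

section FiniteDimensional

variable [FiniteDimensional F V]

theorem IsPointCap.eq_of_le (hC : IsPointCap C) (hP : P ∈ C) (hQ : Q ∈ C) (h : P ≤ Q) : P = Q :=
  eq_of_le_of_finrank_eq_one (hC.finrank_eq_one P hP) (hC.finrank_eq_one Q hQ) h

theorem IsPointCap.trace_self (hC : IsPointCap C) (hP : P ∈ C) : trace C P = {P} := by
  ext R
  rw [mem_trace, mem_singleton]
  exact ⟨fun h => hC.eq_of_le h.1 hP h.2, by rintro rfl; exact ⟨hP, le_rfl⟩⟩

theorem OnChord.sup_left_eq (hC : IsPointCap C) (h : OnChord C A B N) : A ⊔ N = A ⊔ B :=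
  sup_eq_of_ne (hC.finrank_eq_one A h.left_mem) h.finrank_eq_one h.ne_left.symm
    (finrank_sup_of_ne (hC.finrank_eq_one A h.left_mem) (hC.finrank_eq_one B h.right_mem) h.ne)
    le_sup_left h.le_sup

theorem OnChord.left_notMem_tangentPoints (hC : IsPointCap C) (h : OnChord C A B N) :
    A ∉ tangentPoints C N := fun hA =>
  h.ne.symm <| (mem_tangentPoints.1 hA).2 B h.right_mem (h.sup_left_eq hC ▸ le_sup_right)

end FiniteDimensional

section Tangents

variable [Finite V]

open Classical in
/-- The tangents to `C` at `P` that lie in `W`. -/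
noncomputable def tangents (C : Finset (Submodule F V)) (P W : Submodule F V) :
    Finset (Submodule F V) :=
  (flats P W 2).filter fun l => ∀ R ∈ C, R ≤ l → R = P

theorem mem_tangents : l ∈ tangents C P W ↔ l ∈ flats P W 2 ∧ ∀ R ∈ C, R ≤ l → R = P := by
  simp [tangents]

theorem tangents_subset : tangents C P W ⊆ flats P W 2 := fun _ hl => (mem_tangents.1 hl).1

theorem trace_eq_singleton_of_mem_tangents (hP : P ∈ C) (hl : l ∈ tangents C P W) :
    trace C l = {P} := by
  obtain ⟨hlW, htan⟩ := mem_tangents.1 hl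
  ext R
  rw [mem_trace, mem_singleton]
  exact ⟨fun hR => htan R hR.1 hR.2, by rintro rfl; exact ⟨hP, (mem_flats.1 hlW).1⟩⟩

theorem IsPointCap.exists_eq_sup_of_notMem_tangents (hC : IsPointCap C) (hP : P ∈ C)
    (hl : l ∈ flats P W 2) (htan : l ∉ tangents C P W) : ∃ Q ∈ C, Q ≠ P ∧ l = P ⊔ Q := by
  simp only [mem_tangents, hl, true_and] at htan
  push Not at htan
  obtain ⟨Q, hQ, hQl, hQP⟩ := htan
  obtain ⟨hPl, -, hl2⟩ := mem_flats.1 hl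
  exact ⟨Q, hQ, hQP, (sup_eq_of_ne (hC.finrank_eq_one P hP) (hC.finrank_eq_one Q hQ) hQP.symm hl2
    hPl hQl).symm⟩

theorem IsPointCap.card_trace_of_notMem_tangents (hC : IsPointCap C) (hP : P ∈ C)
    (hl : l ∈ flats P W 2) (htan : l ∉ tangents C P W) : #(trace C l) = 2 := by
  obtain ⟨Q, hQ, hQP, rfl⟩ := hC.exists_eq_sup_of_notMem_tangents hP hl htan
  exact hC.card_trace_sup hP hQ hQP.symm

theorem IsPointCap.card_tangents_add_card_trace (hC : IsPointCap C) (hP : P ∈ C) (hPW : P ≤ W) :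
    #(tangents C P W) + #(trace C W) = #(flats P W 2) + 1 := by
  classical
  have count := sum_flats_card_trace hC.finrank_eq_one hPW (hC.finrank_eq_one P hP)
  have hsum : ∑ l ∈ flats P W 2, #(trace C l) + #(tangents C P W) = 2 * #(flats P W 2) :=
    calc ∑ l ∈ flats P W 2, #(trace C l) + #(tangents C P W)
        = ∑ l ∈ flats P W 2, (#(trace C l) + if l ∈ tangents C P W then 1 else 0) := by
          rw [sum_add_distrib, ← sum_filter, ← card_eq_sum_ones, filter_mem_eq_inter,
            inter_eq_right.2 tangents_subset]
      _ = ∑ l ∈ flats P W 2, 2 := by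
          refine sum_congr rfl fun l hl => ?_
          split_ifs with h
          · rw [trace_eq_singleton_of_mem_tangents hP h, card_singleton]
          · rw [hC.card_trace_of_notMem_tangents hP hl h]
      _ = 2 * #(flats P W 2) := by rw [sum_const, smul_eq_mul, mul_comm]
  rw [hC.trace_self hP, card_singleton] at count
  simp only [Nat.reduceAdd] at count
  omega

theorem IsPointCap.card_tangents_add_card_trace_of_finrank_eq_three [Fintype F]
    (hC : IsPointCap C) (hP : P ∈ C) (hPW : P ≤ W) (hW : finrank F W = 3) :
    #(tangents C P W) + #(trace C W) = Fintype.card F + 2 := by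
  rw [hC.card_tangents_add_card_trace hP hPW,
    card_flats_of_finrank_add_two hPW (hC.finrank_eq_one P hP) hW]

end Tangents

end Caps

theorem prod_erase_zero_eq_neg_one {F : Type*} [Field F] [Fintype F] [DecidableEq F] :
    ∏ c ∈ (univ : Finset F).erase 0, c = -1 := by
  have hunits : ∏ c ∈ (univ : Finset F).erase 0, c = ((∏ x : Fˣ, x : Fˣ) : F) := by
    rw [Units.coe_prod]
    symm
    exact prod_bij (fun x _ => (x : F)) (fun x _ => by simp) (fun x _ y _ h => Units.ext h)
      (fun c hc => ⟨Units.mk0 c (ne_of_mem_erase hc), mem_univ _, rfl⟩) fun _ _ => rfl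
  rw [hunits, FiniteField.prod_univ_units_id_eq_neg_one, Units.val_neg, Units.val_one]

section PluckerBracket

variable {F M : Type*} [Field F]

/-- A bracket on points of a projective line satisfying the three-term Plücker relation, the model
being `br x y = det (x, y)` for representing vectors `x`, `y`. The relation carries the signs of
characteristic two, where the determinant is symmetric. -/
structure IsPluckerBracket (br : M → M → F) : Prop where
  symm : ∀ x y, br x y = br y x
  self : ∀ x, br x x = 0
  plucker : ∀ r x y z, br r x * br y z + br r y * br x z + br r z * br x y = 0

namespace IsPluckerBracket

variable {br : M → M → F} {E S : Finset M} {s s' u v : M}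

theorem eq_add_of_ne_zero [CharP F 2] (hbr : IsPluckerBracket br) (h : br u v ≠ 0) (r x : M) :
    br r x = br r v / br u v * br u x + br r u / br u v * br v x := by
  have hsum : br r x * br u v + (br r v * br u x + br r u * br v x) = 0 := by
    linear_combination hbr.plucker r x u v + br r v * hbr.symm u x + br r u * hbr.symm v x
  field_simp
  exact CharTwo.add_eq_zero.1 hsum

variable [DecidableEq M]

theorem sum_mul_div_prod_erase (hbr : IsPluckerBracket br)
    (hE : (E : Set M).Pairwise fun x y => br x y ≠ 0) (hu : u ∈ E) (g : M → F) :
    ∑ x ∈ E, br u x * (g x / ∏ m ∈ E.erase x, br x m) =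
      ∑ x ∈ E.erase u, g x / ∏ m ∈ (E.erase u).erase x, br x m := by
  rw [← add_sum_erase _ _ hu, hbr.self, zero_mul, zero_add]
  refine sum_congr rfl fun x hx => ?_
  obtain ⟨hxu, hxE⟩ := mem_erase.1 hx
  have hne := hE hxE hu hxu
  rw [← mul_prod_erase _ _ (mem_erase.2 ⟨hxu.symm, hu⟩), erase_right_comm, hbr.symm u x]
  field_simp

variable [CharP F 2]

theorem sum_prod_div_prod_erase (hbr : IsPluckerBracket br) (R : Finset M) :
    ∀ E : Finset M, #E = #R + 2 → (E : Set M).Pairwise (fun x y => br x y ≠ 0) →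
      ∑ x ∈ E, (∏ r ∈ R, br r x) / ∏ m ∈ E.erase x, br x m = 0 := by
  induction R using Finset.induction_on with
  | empty =>
    intro E hcard _
    obtain ⟨x, y, hxy, rfl⟩ := card_eq_two.1 hcard
    rw [sum_pair hxy, erase_insert (by simpa using hxy), pair_comm,
      erase_insert (by simpa using hxy.symm), prod_singleton, prod_singleton, hbr.symm y x]
    exact CharTwo.add_self_eq_zero _
  | insert r R hr ih =>
    intro E hcard hE
    rw [card_insert_of_notMem hr] at hcard
    obtain ⟨u, hu, v, hv, huv⟩ := one_lt_card.1 (show 1 < #E by omega)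
    have smaller : ∀ w ∈ E, ∑ x ∈ E, br w x * ((∏ r ∈ R, br r x) / ∏ m ∈ E.erase x, br x m) = 0 :=
      fun w hw => by
        rw [hbr.sum_mul_div_prod_erase hE hw]
        exact ih _ (by rw [card_erase_of_mem hw]; omega)
          (hE.mono (coe_subset.2 (erase_subset _ _)))
    calc ∑ x ∈ E, (∏ r ∈ insert r R, br r x) / ∏ m ∈ E.erase x, br x m
        = ∑ x ∈ E, (br r v / br u v * (br u x * ((∏ r ∈ R, br r x) / ∏ m ∈ E.erase x, br x m)) +
            br r u / br u v * (br v x * ((∏ r ∈ R, br r x) / ∏ m ∈ E.erase x, br x m))) := by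
          refine sum_congr rfl fun x _ => ?_
          rw [prod_insert hr, hbr.eq_add_of_ne_zero (hE hu hv huv) r x]
          ring
      _ = 0 := by rw [sum_add_distrib, ← mul_sum, ← mul_sum, smaller u hu, smaller v hv]; ring

theorem injOn_div (hbr : IsPluckerBracket br) (hS : (S : Set M).Pairwise fun x y => br x y ≠ 0)
    (hs : s ∈ S) (hs' : s' ∈ S) (hne : s ≠ s') :
    Set.InjOn (fun p => br s p / br s' p) ((S.erase s).erase s') := by
  intro p hp p' hp' heq
  simp only [mem_coe, mem_erase] at hp hp'
  by_contra hpp'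
  have heq' : br s p * br s' p' = br s p' * br s' p :=
    (div_eq_div_iff (hS hs' hp.2.2 hp.1.symm) (hS hs' hp'.2.2 hp'.1.symm)).1 heq
  refine mul_ne_zero (hS hs hs' hne) (hS hp.2.2 hp'.2.2 hpp') ?_
  have cancel := CharTwo.add_self_eq_zero (br s p' * br s' p)
  linear_combination hbr.plucker s p p' s' - heq' - cancel - br s p * hbr.symm p' s' -
    br s p' * hbr.symm p s'

variable [Fintype F]

/-- The quotients `br s p / br s' p` run through the nonzero elements of the field, and the product
of these is `1`. -/
theorem prod_erase_eq (hbr : IsPluckerBracket br) (hS : (S : Set M).Pairwise fun x y => br x y ≠ 0)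
    (hcard : #S = Fintype.card F + 1) (hs : s ∈ S) (hs' : s' ∈ S) :
    ∏ p ∈ S.erase s, br s p = ∏ p ∈ S.erase s', br s' p := by
  classical
  obtain rfl | hne := eq_or_ne s s'
  · rfl
  have hs'_mem : s' ∈ S.erase s := mem_erase.2 ⟨hne.symm, hs'⟩
  have hinj := hbr.injOn_div hS hs hs' hne
  have ne_zero : ∀ p ∈ (S.erase s).erase s', br s p ≠ 0 ∧ br s' p ≠ 0 := fun p hp => by
    simp only [mem_erase] at hp
    exact ⟨hS hs hp.2.2 hp.2.1.symm, hS hs' hp.2.2 hp.1.symm⟩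
  have himage : ((S.erase s).erase s').image (fun p => br s p / br s' p) = univ.erase 0 := by
    refine eq_of_subset_of_card_le (image_subset_iff.2 fun p hp => ?_) ?_
    · exact mem_erase.2 ⟨div_ne_zero (ne_zero p hp).1 (ne_zero p hp).2, mem_univ _⟩
    · rw [card_image_of_injOn hinj, card_erase_of_mem hs'_mem, card_erase_of_mem hs,
        card_erase_of_mem (mem_univ _), card_univ]
      omega
  have hprod : ∏ p ∈ (S.erase s).erase s', br s p / br s' p = 1 := by
    rw [← prod_image (f := fun c => c) hinj, himage, prod_erase_zero_eq_neg_one, CharTwo.neg_eq]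
  rw [prod_div_distrib, div_eq_one_iff_eq
    (prod_ne_zero_iff.2 fun p hp => (ne_zero p hp).2)] at hprod
  rw [← mul_prod_erase _ _ hs'_mem, hprod, hbr.symm s s', erase_right_comm,
    mul_prod_erase _ _ (mem_erase.2 ⟨hne, hs⟩)]

end IsPluckerBracket

end PluckerBracket

theorem sum_sum_erase_eq_zero {F ι : Type*} [Ring F] [CharP F 2] [DecidableEq ι] (E : Finset ι)
    {g : ι → ι → F} (hg : ∀ a j, g a j = g j a) : ∑ a ∈ E, ∑ j ∈ E.erase a, g a j = 0 := by
  rw [sum_sigma']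
  refine sum_involution (fun x _ => ⟨x.2, x.1⟩) ?_ ?_ ?_ fun _ _ => rfl
  · exact fun x _ => by rw [hg x.2 x.1, CharTwo.add_self_eq_zero]
  · intro x hx _ heq
    exact (mem_erase.1 (mem_sigma.1 hx).2).1 (congrArg Sigma.fst heq)
  · intro x hx
    simp only [mem_sigma, mem_erase] at hx ⊢
    exact ⟨hx.2.2, hx.2.1.symm, hx.1⟩

section PlaneBracket

variable {F V : Type*} [Field F] [AddCommGroup V] [Module F V]
variable {W P Q R : Submodule F V}

/-- A ternary bracket on the points of the plane `W` which behaves like the determinant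
`det (x, y, z)` of homogeneous coordinates in characteristic two. -/
structure IsPlaneBracket (W : Submodule F V)
    (br : Submodule F V → Submodule F V → Submodule F V → F) : Prop where
  isPluckerBracket : ∀ P, IsPluckerBracket (br P)
  symm_left : ∀ P Q R, br P Q R = br Q P R
  eq_zero_iff : ∀ {P Q R : Submodule F V}, finrank F P = 1 → finrank F Q = 1 → finrank F R = 1 →
    P ≤ W → Q ≤ W → R ≤ W → P ≠ Q → (br P Q R = 0 ↔ R ≤ P ⊔ Q)

theorem det_ne_zero_iff_finrank_span_eq {n : ℕ} (v : Fin n → Fin n → F) :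
    (Matrix.of v).det ≠ 0 ↔ finrank F (Submodule.span F (Set.range v)) = n := by
  rw [← isUnit_iff_ne_zero, ← Matrix.isUnit_iff_isUnit_det,
    ← Matrix.linearIndependent_rows_iff_isUnit, linearIndependent_iff_card_eq_finrank_span,
    Fintype.card_fin, eq_comm]
  rfl

theorem isPluckerBracket_det [CharP F 2] {ι : Type*} (v : ι → Fin 3 → F) (a : Fin 3 → F) :
    IsPluckerBracket fun i j => (Matrix.of ![a, v i, v j]).det where
  symm i j := by
    rw [← CharTwo.add_eq_zero]
    simp only [Matrix.det_fin_three, Matrix.of_apply, Matrix.cons_val]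
    ring
  self i := by
    simp only [Matrix.det_fin_three, Matrix.of_apply, Matrix.cons_val]
    ring
  plucker r i j k := by
    have signed : (Matrix.of ![a, v r, v i]).det * (Matrix.of ![a, v j, v k]).det -
        (Matrix.of ![a, v r, v j]).det * (Matrix.of ![a, v i, v k]).det +
        (Matrix.of ![a, v r, v k]).det * (Matrix.of ![a, v i, v j]).det = 0 := by
      simp only [Matrix.det_fin_three, Matrix.of_apply, Matrix.cons_val]
      ring
    rwa [CharTwo.sub_eq_add] at signed

variable [FiniteDimensional F V]

theorem exists_homogeneous_coordinates {n : ℕ} (hW : finrank F W = n) :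
    ∃ (φ : (Fin n → F) →ₗ[F] V) (x : Submodule F V → Fin n → F), Function.Injective φ ∧
      ∀ P : Submodule F V, finrank F P = 1 → P ≤ W → P = (F ∙ x P).map φ := by
  let e : (Fin n → F) ≃ₗ[F] W := LinearEquiv.ofFinrankEq _ _ (by rw [hW, finrank_fin_fun])
  have exists_coord : ∀ P : Submodule F V, ∃ x : Fin n → F, finrank F P = 1 → P ≤ W →
      P = (F ∙ x).map (W.subtype ∘ₗ e.toLinearMap) := by
    intro P
    by_cases hP : finrank F P = 1 ∧ P ≤ W
    · obtain ⟨v, rfl⟩ := ((Submodule.finrank_le_one_iff_isPrincipal P).1 hP.1.le).principal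
      have hv : v ∈ W := hP.2 (Submodule.mem_span_singleton_self v)
      exact ⟨e.symm ⟨v, hv⟩, fun _ _ => by simp [Submodule.map_span]⟩
    · exact ⟨0, fun h h' => absurd ⟨h, h'⟩ hP⟩
  choose x hx using exists_coord
  exact ⟨_, x, W.injective_subtype.comp e.injective, hx⟩

theorem exists_isPlaneBracket [CharP F 2] (hW : finrank F W = 3) :
    ∃ br, IsPlaneBracket W br := by
  obtain ⟨φ, x, hφ, hx⟩ := exists_homogeneous_coordinates hW
  refine ⟨fun P Q R => (Matrix.of ![x P, x Q, x R]).det,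
    fun P => isPluckerBracket_det x (x P), fun P Q R => ?_, ?_⟩
  · rw [← CharTwo.add_eq_zero]
    simp only [Matrix.det_fin_three, Matrix.of_apply, Matrix.cons_val]
    ring
  · intro P Q R hP hQ hR hPW hQW hRW hne
    have hspan : (Submodule.span F (Set.range ![x P, x Q, x R])).map φ = P ⊔ Q ⊔ R := by
      rw [Matrix.range_cons, Matrix.range_cons, Matrix.range_cons_empty, Submodule.span_union,
        Submodule.span_union, Submodule.map_sup, Submodule.map_sup, ← hx P hP hPW, ← hx Q hQ hQW,
        ← hx R hR hRW, sup_assoc]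
    rw [← not_iff_not, ← ne_eq, det_ne_zero_iff_finrank_span_eq,
      (Submodule.equivMapOfInjective φ hφ _).finrank_eq, hspan]
    refine ⟨fun h hle => ?_, fun h => ?_⟩
    · rw [sup_eq_left.2 hle, finrank_sup_of_ne hP hQ hne] at h
      omega
    · rw [finrank_sup_of_not_le hR h, finrank_sup_of_ne hP hQ hne]

end PlaneBracket

section LemmaOfTangents

variable {F V : Type*} [Field F] [AddCommGroup V] [Module F V]
variable {K S : Finset (Submodule F V)} {A B N P Q a W : Submodule F V}

theorem IsPlaneBracket.ne_zero {br : Submodule F V → Submodule F V → Submodule F V → F}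
    (hbr : IsPlaneBracket W br) (hK : IsPointCap K) (hKW : ∀ P ∈ K, P ≤ W) (hP : P ∈ K)
    (hQ : Q ∈ K) (ha : a ∈ K) (haP : a ≠ P) (haQ : a ≠ Q) (hPQ : P ≠ Q) : br a P Q ≠ 0 := by
  rw [ne_eq, hbr.eq_zero_iff (hK.finrank_eq_one a ha) (hK.finrank_eq_one P hP)
    (hK.finrank_eq_one Q hQ) (hKW a ha) (hKW P hP) (hKW Q hQ) haP]
  exact hK.not_le_sup a ha P hP Q hQ haP haQ hPQ

/-- A transversal of the lines of `W` through `a`: a set of points of `W` other than `a`, exactly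
one on each of these lines, which contains the points of `K` other than `a`. -/
structure IsTransversal [Finite V] (K : Finset (Submodule F V)) (W a : Submodule F V)
    (S : Finset (Submodule F V)) : Prop where
  mem_of_mem : ∀ P ∈ K, P ≠ a → P ∈ S
  ne : ∀ P ∈ S, P ≠ a
  le : ∀ P ∈ S, P ≤ W
  finrank_eq_one : ∀ P ∈ S, finrank F P = 1
  bijOn : Set.BijOn (a ⊔ ·) (S : Set (Submodule F V)) (flats a W 2)

/-- The tangent form of the arc `K` at its point `a`: up to a scalar, the product of the linear
forms `br a r ·` defining the tangents of `K` at `a`. It satisfies the interpolation identity of a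
form of degree `q + 2 - #K` in two variables. -/
structure IsTangentForm [Fintype F] [DecidableEq (Submodule F V)]
    (br : Submodule F V → Submodule F V → F) (K : Finset (Submodule F V)) (W a : Submodule F V)
    (f : Submodule F V → F) : Prop where
  sum_eq_zero : ∀ E : Finset (Submodule F V), #E + #K = Fintype.card F + 4 →
    (E : Set (Submodule F V)).Pairwise (fun x y => br x y ≠ 0) →
      ∑ x ∈ E, f x / ∏ m ∈ E.erase x, br x m = 0
  eq_zero_iff : ∀ y : Submodule F V, finrank F y = 1 → y ≤ W → y ≠ a →
    (f y = 0 ↔ ∀ R ∈ K, R ≤ a ⊔ y → R = a)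
  mul_prod_eq_one : ∀ j ∈ K.erase a, f j * ∏ m ∈ (K.erase a).erase j, br j m = 1

section Transversals

variable [Finite V]

theorem exists_isTransversal (hK : IsPointCap K) (hKW : ∀ P ∈ K, P ≤ W) (ha : a ∈ K) :
    ∃ S : Finset (Submodule F V), IsTransversal K W a S := by
  have ha1 := hK.finrank_eq_one a ha
  let points : Set (Submodule F V) := {P | P ≠ a ∧ P ≤ W ∧ finrank F P = 1}
  have hsub : {P | P ∈ K ∧ P ≠ a} ⊆ points := fun P hP =>
    ⟨hP.2, hKW P hP.1, hK.finrank_eq_one P hP.1⟩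
  have hinj : Set.InjOn (a ⊔ ·) {P | P ∈ K ∧ P ≠ a} := by
    intro P hP Q hQ (heq : a ⊔ P = a ⊔ Q)
    by_contra hne
    exact hK.not_le_sup a ha P hP.1 Q hQ.1 hP.2.symm hQ.2.symm hne (heq ▸ le_sup_right)
  have hmaps : (a ⊔ ·) '' {P | P ∈ K ∧ P ≠ a} ⊆ flats a W 2 := by
    rintro _ ⟨P, hP, rfl⟩
    exact mem_flats.2 ⟨le_sup_left, sup_le (hKW a ha) (hKW P hP.1),
      finrank_sup_of_ne ha1 (hK.finrank_eq_one P hP.1) hP.2.symm⟩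
  have hsurj : Set.SurjOn (a ⊔ ·) points (flats a W 2) := by
    intro l hl
    obtain ⟨hal, hlW, hl2⟩ := mem_flats.1 hl
    obtain ⟨v, hvl, hva⟩ := SetLike.exists_of_lt (hal.lt_of_ne (by rintro rfl; omega))
    have hle : F ∙ v ≤ l := (Submodule.span_singleton_le_iff_mem v l).2 hvl
    have hne : ¬F ∙ v ≤ a := by rwa [Submodule.span_singleton_le_iff_mem]
    exact ⟨F ∙ v, ⟨fun h => hne h.le, hle.trans hlW, finrank_span_singleton fun h =>
      hva (h ▸ a.zero_mem)⟩, sup_eq_of_not_le hal (by omega) hle hne⟩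
  obtain ⟨S, hKS, hS, hbij⟩ := hinj.bijOn_image.exists_extend_of_subset hsub hmaps hsurj
  refine ⟨S.toFinite.toFinset, fun P hP hPa => ?_, fun P hP => ?_, fun P hP => ?_, fun P hP => ?_,
    by simpa using hbij⟩
  · simpa using hKS ⟨hP, hPa⟩
  all_goals rw [Set.Finite.mem_toFinset] at hP
  exacts [(hS hP).1, (hS hP).2.1, (hS hP).2.2]

namespace IsTransversal

theorem eq_of_le_sup (hS : IsTransversal K W a S) (ha : finrank F a = 1) (hP : P ∈ S) (hQ : Q ∈ S)
    (h : Q ≤ a ⊔ P) : Q = P :=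
  hS.bijOn.injOn hQ hP <| sup_eq_of_ne ha (hS.finrank_eq_one Q hQ) (hS.ne Q hQ).symm
    (finrank_sup_of_ne ha (hS.finrank_eq_one P hP) (hS.ne P hP).symm) le_sup_left h

theorem card_eq [Fintype F] (hS : IsTransversal K W a S) (ha : finrank F a = 1) (haW : a ≤ W)
    (hW : finrank F W = 3) : #S = Fintype.card F + 1 := by
  rw [← card_flats_of_finrank_add_two haW ha hW]
  exact card_nbij (a ⊔ ·) hS.bijOn.mapsTo hS.bijOn.injOn hS.bijOn.surjOn

theorem pairwise_ne_zero {br : Submodule F V → Submodule F V → Submodule F V → F}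
    (hS : IsTransversal K W a S) (ha : finrank F a = 1) (haW : a ≤ W)
    (hbr : IsPlaneBracket W br) :
    (S : Set (Submodule F V)).Pairwise fun x y => br a x y ≠ 0 := by
  intro x hx y hy hne h
  rw [hbr.eq_zero_iff ha (hS.finrank_eq_one x hx) (hS.finrank_eq_one y hy) haW (hS.le x hx)
    (hS.le y hy) (hS.ne x hx).symm] at h
  exact hne (hS.eq_of_le_sup ha hx hy h).symm

theorem exists_notMem_le_sup_iff (hS : IsTransversal K W a S) (hK : IsPointCap K)
    (ha : a ∈ K) (haW : a ≤ W) (hP : finrank F P = 1) (hPW : P ≤ W) (hPa : P ≠ a) :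
    (∃ r ∈ S, r ∉ K ∧ P ≤ a ⊔ r) ↔ ∀ R ∈ K, R ≤ a ⊔ P → R = a := by
  have ha1 := hK.finrank_eq_one a ha
  constructor
  · rintro ⟨r, hr, hrK, hle⟩ R hR hRP
    by_contra hRa
    have hRr : R = r := hS.eq_of_le_sup ha1 hr (hS.mem_of_mem R hR hRa)
      (hRP.trans (sup_le le_sup_left hle))
    exact hrK (hRr ▸ hR)
  · intro h
    have hline : a ⊔ P ∈ flats a W 2 :=
      mem_flats.2 ⟨le_sup_left, sup_le haW hPW, finrank_sup_of_ne ha1 hP hPa.symm⟩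
    obtain ⟨r, hr, hra : a ⊔ r = a ⊔ P⟩ := hS.bijOn.surjOn hline
    exact ⟨r, hr, fun hrK => hS.ne r hr (h r hrK (hra ▸ le_sup_right)), hra ▸ le_sup_right⟩

variable [Fintype F] [CharP F 2] [DecidableEq (Submodule F V)]

theorem isTangentForm {br : Submodule F V → Submodule F V → Submodule F V → F}
    (hS : IsTransversal K W a S) (hK : IsPointCap K) (hW : finrank F W = 3)
    (ha : a ∈ K) (haW : a ≤ W) (hbr : IsPlaneBracket W br) (s : Submodule F V) (hs : s ∈ S) :
    IsTangentForm (br a) K W a fun y =>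
      (∏ r ∈ S \ K.erase a, br a r y) / ∏ p ∈ S.erase s, br a s p := by
  have ha1 := hK.finrank_eq_one a ha
  have hpl := hbr.isPluckerBracket a
  have hpair := hS.pairwise_ne_zero ha1 haW hbr
  have hKS : K.erase a ⊆ S := fun P hP => hS.mem_of_mem P (mem_of_mem_erase hP) (ne_of_mem_erase hP)
  have scale_ne_zero : ∀ x ∈ S, ∏ p ∈ S.erase x, br a x p ≠ 0 := fun x hx =>
    prod_ne_zero_iff.2 fun p hp => hpair hx (mem_of_mem_erase hp) (ne_of_mem_erase hp).symm
  refine ⟨fun E hE hEpair => ?_, fun y hy hyW hya => ?_, fun j hj => ?_⟩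
  · simp only [div_right_comm _ (∏ p ∈ S.erase s, br a s p), ← sum_div]
    rw [hpl.sum_prod_div_prod_erase _ E _ hEpair, zero_div]
    have := hS.card_eq ha1 haW hW
    have := card_erase_add_one ha
    have := card_sdiff_add_card_eq_card hKS
    omega
  · rw [← hS.exists_notMem_le_sup_iff hK ha haW hy hyW hya, div_eq_zero_iff,
      or_iff_left (scale_ne_zero s hs), prod_eq_zero_iff]
    refine exists_congr fun r => ?_
    rw [mem_sdiff, mem_erase, and_assoc, and_congr_right_iff]
    intro hr
    rw [hbr.eq_zero_iff ha1 (hS.finrank_eq_one r hr) hy haW (hS.le r hr) hyW (hS.ne r hr).symm]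
    simp only [hS.ne r hr, ne_eq, not_false_eq_true, true_and]
  · have hjS := hKS hj
    have split : S.erase j \ (K.erase a).erase j = S \ K.erase a := by
      ext p
      simp only [mem_sdiff, mem_erase]
      grind
    calc ((∏ r ∈ S \ K.erase a, br a r j) / ∏ p ∈ S.erase s, br a s p) *
          ∏ m ∈ (K.erase a).erase j, br a j m
        = (∏ p ∈ S.erase j, br a j p) / ∏ p ∈ S.erase s, br a s p := by
          rw [div_mul_eq_mul_div, ← prod_sdiff (erase_subset_erase j hKS), split]
          simp only [hpl.symm _ j]
      _ = 1 := by
        rw [hpl.prod_erase_eq hpair (hS.card_eq ha1 haW hW) hjS hs, div_self (scale_ne_zero s hs)]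

end IsTransversal

end Transversals

section TangentForms

variable [Fintype F] [DecidableEq (Submodule F V)]
variable {br : Submodule F V → Submodule F V → Submodule F V → F}
variable {E : Finset (Submodule F V)} {f : Submodule F V → Submodule F V → F}

theorem IsTangentForm.eq_inv_prod {f : Submodule F V → F} (hf : IsTangentForm (br a) K W a f)
    {j : Submodule F V} (hj : j ∈ K.erase a) :
    f j = (∏ m ∈ (K.erase a).erase j, br a j m)⁻¹ :=
  eq_inv_of_mul_eq_one_left (hf.mul_prod_eq_one j hj)

theorem IsTangentForm.div_add_sum_eq_zero {f : Submodule F V → F}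
    (hf : IsTangentForm (br a) K W a f) (hbr : IsPlaneBracket W br) (hK : IsPointCap K)
    (hKW : ∀ P ∈ K, P ≤ W) (hEK : E ⊆ K) (hcard : #E + #K = Fintype.card F + 4) (ha : a ∈ E)
    (hN : ∀ m ∈ E.erase a, br a m N ≠ 0) :
    f N / ∏ m ∈ E.erase a, br a N m + ∑ j ∈ E.erase a,
      (∏ m ∈ (K.erase a).erase j, br a j m)⁻¹ /
        (br a j N * ∏ m ∈ (E.erase a).erase j, br a j m) = 0 := by
  have hpl := hbr.isPluckerBracket a
  have hNE : N ∉ E.erase a := fun h => hN N h (hpl.self N)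
  have hpair : (insert N (E.erase a) : Set (Submodule F V)).Pairwise fun x y => br a x y ≠ 0 := by
    refine Set.pairwise_insert.2 ⟨fun x hx y hy hxy => ?_,
      fun m hm _ => ⟨hpl.symm N m ▸ hN m hm, hN m hm⟩⟩
    obtain ⟨⟨hxa, hx⟩, hya, hy⟩ := mem_erase.1 hx, mem_erase.1 hy
    exact hbr.ne_zero hK hKW (hEK hx) (hEK hy) (hEK ha) hxa.symm hya.symm hxy
  have hsum := hf.sum_eq_zero (insert N (E.erase a))
    (by rw [card_insert_of_notMem hNE, card_erase_add_one ha, hcard]) (by exact_mod_cast hpair)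
  rw [sum_insert hNE, erase_insert hNE] at hsum
  convert hsum using 2
  refine sum_congr rfl fun j hj => ?_
  have hNj : N ≠ j := by rintro rfl; exact hNE hj
  rw [hf.eq_inv_prod (erase_subset_erase a hEK hj), erase_insert_of_ne hNj,
    prod_insert fun h => hNE (mem_of_mem_erase h)]

theorem IsPointCap.exists_isTangentForm [Finite V] [CharP F 2] (hK : IsPointCap K)
    (hKW : ∀ P ∈ K, P ≤ W) (hW : finrank F W = 3) (hbr : IsPlaneBracket W br) (ha : a ∈ K) :
    ∃ f, IsTangentForm (br a) K W a f := by
  obtain ⟨S, hS⟩ := exists_isTransversal hK hKW ha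
  have hcard := hS.card_eq (hK.finrank_eq_one a ha) (hKW a ha) hW
  obtain ⟨s, hs⟩ := card_pos.1 (show 0 < #S by omega)
  exact ⟨_, hS.isTangentForm hK hW ha (hKW a ha) hbr s hs⟩

/-- Segre's lemma of tangents: the interpolation identities of the tangent forms are summed over
`E`, and the terms in which `N` is not the point of evaluation cancel in pairs. -/
theorem sum_tangentForm_div_prod_eq_zero [CharP F 2] (hbr : IsPlaneBracket W br) (hK : IsPointCap K)
    (hKW : ∀ P ∈ K, P ≤ W) (hEK : E ⊆ K) (hcard : #E + #K = Fintype.card F + 4)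
    (hf : ∀ a ∈ E, IsTangentForm (br a) K W a (f a))
    (hN : ∀ a ∈ E, ∀ m ∈ E.erase a, br a m N ≠ 0) :
    ∑ a ∈ E, f a N / ∏ m ∈ E.erase a, br a N m = 0 := by
  have cancel := sum_sum_erase_eq_zero (F := F) E (g := fun a j =>
    (∏ m ∈ (K.erase a).erase j, br a j m)⁻¹ /
      (br a j N * ∏ m ∈ (E.erase a).erase j, br a j m)) fun a j => by
    simp only [hbr.symm_left a j, erase_right_comm (a := a) (b := j)]
  have hsum := sum_eq_zero fun a ha =>
    (hf a ha).div_add_sum_eq_zero hbr hK hKW hEK hcard ha (hN a ha)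
  rwa [sum_add_distrib, cancel, add_zero] at hsum

end TangentForms

end LemmaOfTangents

section SegreBound

variable {F V : Type*} [Field F] [AddCommGroup V] [Module F V]
variable {C K : Finset (Submodule F V)} {A B N P Q W a m : Submodule F V}

theorem OnChord.restrict (h : OnChord C A B N) (hA : A ≤ W) (hB : B ≤ W) :
    OnChord (trace C W) A B N :=
  ⟨mem_trace.2 ⟨h.left_mem, hA⟩, mem_trace.2 ⟨h.right_mem, hB⟩, h.ne, h.finrank_eq_one,
    fun hN => h.notMem (trace_subset hN), h.le_sup⟩

theorem trace_tangentPoints_subset : trace (tangentPoints C N) W ⊆ tangentPoints (trace C W) N := by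
  intro P hP
  obtain ⟨hPC, htan⟩ := mem_tangentPoints.1 (mem_trace.1 hP).1
  exact mem_tangentPoints.2 ⟨mem_trace.2 ⟨hPC, (mem_trace.1 hP).2⟩,
    fun R hR => htan R (trace_subset hR)⟩

variable [Finite V]

theorem not_le_sup_of_mem_tangentPoints (hK : IsPointCap K) (hP : P ∈ tangentPoints K N)
    (hQ : Q ∈ K) (hN : finrank F N = 1) (hNK : N ∉ K) (h : P ≠ Q) : ¬N ≤ P ⊔ Q := fun hle => by
  obtain ⟨hPK, htan⟩ := mem_tangentPoints.1 hP
  exact h.symm <| htan Q hQ <| le_sup_exchange (hK.finrank_eq_one P hPK) (hK.finrank_eq_one Q hQ) hN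
    (fun he => hNK (he ▸ hPK)) hle

theorem not_le_sup_of_mem_insert [DecidableEq (Submodule F V)] {J : Finset (Submodule F V)}
    (hK : IsPointCap K) (hJ : J ⊆ tangentPoints K N) (hA : A ∈ K) (hN : finrank F N = 1)
    (hNK : N ∉ K) (ha : a ∈ insert A J) (hm : m ∈ insert A J) (h : a ≠ m) : ¬N ≤ a ⊔ m := by
  have hEK : insert A J ⊆ K := insert_subset hA (hJ.trans tangentPoints_subset)
  obtain haJ | hmJ : a ∈ J ∨ m ∈ J := by
    by_contra! hnot
    exact h <| ((mem_insert.1 ha).resolve_right hnot.1).trans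
      ((mem_insert.1 hm).resolve_right hnot.2).symm
  · exact not_le_sup_of_mem_tangentPoints hK (hJ haJ) (hEK hm) hN hNK h
  · exact sup_comm m a ▸ not_le_sup_of_mem_tangentPoints hK (hJ hmJ) (hEK ha) hN hNK h.symm

theorem OnChord.trace_tangentPoints_sup (hC : IsPointCap C) (h : OnChord C A B N) :
    trace (tangentPoints C N) (A ⊔ B) = ∅ := by
  classical
  refine eq_empty_of_forall_notMem fun P hP => ?_
  obtain ⟨hPN, hPAB⟩ := mem_trace.1 hP
  have hPtrace : P ∈ trace C (A ⊔ B) := mem_trace.2 ⟨tangentPoints_subset hPN, hPAB⟩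
  rw [hC.trace_sup h.left_mem h.right_mem h.ne, mem_insert, mem_singleton] at hPtrace
  obtain rfl | rfl := hPtrace
  exacts [h.left_notMem_tangentPoints hC hPN, h.symm.left_notMem_tangentPoints hC hPN]

variable [Fintype F]

local notation "q" => Fintype.card F

theorem IsPointCap.card_trace_le (hC : IsPointCap C) (hP : P ∈ C) (hPW : P ≤ W)
    (hW : finrank F W = 3) : #(trace C W) ≤ q + 2 := by
  have := hC.card_tangents_add_card_trace_of_finrank_eq_three hP hPW hW
  omega

variable [CharP F 2]

theorem OnChord.card_add_card_tangentPoints_le (hK : IsPointCap K) (hKW : ∀ P ∈ K, P ≤ W)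
    (hW : finrank F W = 3) (h : OnChord K A B N) : #K + #(tangentPoints K N) ≤ q + 2 := by
  classical
  by_contra! hlt
  obtain ⟨br, hbr⟩ := exists_isPlaneBracket hW
  have hNW : N ≤ W := h.le_sup.trans (sup_le (hKW A h.left_mem) (hKW B h.right_mem))
  have hN_ne : ∀ a ∈ K, N ≠ a := fun a ha he => h.notMem (he ▸ ha)
  have hK_le : #K ≤ q + 2 := by
    simpa only [trace, filter_true_of_mem hKW] using
      hK.card_trace_le h.left_mem (hKW A h.left_mem) hW
  obtain ⟨J, hJ, hJcard⟩ := exists_subset_card_eq (show q + 3 - #K ≤ #(tangentPoints K N) by omega)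
  have hAJ : A ∉ J := fun hA => h.left_notMem_tangentPoints hK (hJ hA)
  have hEK : insert A J ⊆ K := insert_subset h.left_mem (hJ.trans tangentPoints_subset)
  choose! f hf using fun a (ha : a ∈ K) => hK.exists_isTangentForm hKW hW hbr ha
  have hN : ∀ a ∈ insert A J, ∀ m ∈ (insert A J).erase a, br a m N ≠ 0 := by
    intro a ha m hm hzero
    obtain ⟨hma, hm⟩ := mem_erase.1 hm
    rw [hbr.eq_zero_iff (hK.finrank_eq_one a (hEK ha)) (hK.finrank_eq_one m (hEK hm))
      h.finrank_eq_one (hKW a (hEK ha)) (hKW m (hEK hm)) hNW hma.symm] at hzero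
    exact not_le_sup_of_mem_insert hK hJ h.left_mem h.finrank_eq_one h.notMem ha hm hma.symm hzero
  have hsum := sum_tangentForm_div_prod_eq_zero hbr hK hKW hEK
    (by rw [card_insert_of_notMem hAJ]; omega) (fun a ha => hf a (hEK ha)) hN
  have vanish : ∀ a ∈ J, f a N = 0 := fun a ha =>
    ((hf a (hEK (mem_insert_of_mem ha))).eq_zero_iff N h.finrank_eq_one hNW
      (hN_ne a (hEK (mem_insert_of_mem ha)))).2 (mem_tangentPoints.1 (hJ ha)).2
  rw [sum_insert hAJ, sum_eq_zero fun a ha => by rw [vanish a ha, zero_div], add_zero,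
    div_eq_zero_iff, or_iff_left (prod_ne_zero_iff.2 fun m hm => ?_),
    (hf A h.left_mem).eq_zero_iff N h.finrank_eq_one hNW (hN_ne A h.left_mem)] at hsum
  · exact h.left_notMem_tangentPoints hK (mem_tangentPoints.2 ⟨h.left_mem, hsum⟩)
  · exact (hbr.isPluckerBracket A).symm N m ▸ hN A (mem_insert_self A J) m hm

/-- The planes of `W` through the chord `A ⊔ B` partition the points of `W` off that chord. -/
theorem OnChord.card_trace_add_card_trace_tangentPoints_le (hC : IsPointCap C)
    (h : OnChord C A B N) (hA : A ≤ W) (hB : B ≤ W) :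
    #(trace C W) + #(trace (tangentPoints C N) W) ≤
      q * #(flats (A ⊔ B) W 3) + 2 := by
  have hAB := finrank_sup_of_ne (hC.finrank_eq_one A h.left_mem) (hC.finrank_eq_one B h.right_mem)
    h.ne
  have hle : A ⊔ B ≤ W := sup_le hA hB
  have countC := sum_flats_card_trace hC.finrank_eq_one hle hAB
  have countJ := sum_flats_card_trace (hC.mono (tangentPoints_subset (N := N))).finrank_eq_one hle
    hAB
  have plane_le : ∀ X ∈ flats (A ⊔ B) W 3,
      #(trace C X) + #(trace (tangentPoints C N) X) ≤ q + 2 := by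
    intro X hX
    obtain ⟨hABX, -, hX3⟩ := mem_flats.1 hX
    have := (h.restrict (le_sup_left.trans hABX)
      (le_sup_right.trans hABX)).card_add_card_tangentPoints_le
      (hC.mono trace_subset) (fun P hP => (mem_trace.1 hP).2) hX3
    have := card_le_card (trace_tangentPoints_subset (C := C) (N := N) (W := X))
    omega
  have hsum := sum_le_card_nsmul _ _ _ plane_le
  rw [sum_add_distrib, smul_eq_mul, mul_add] at hsum
  rw [hC.card_trace_sup h.left_mem h.right_mem h.ne] at countC
  rw [h.trace_tangentPoints_sup hC, card_empty] at countJ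
  simp only [Nat.reduceAdd] at countC countJ
  linarith

end SegreBound

section LinearSpaces

variable {α : Type*} [LE α] {S T B G : Finset α} {a b g x : α} {q : ℕ}

/-- A finite linear space with point set `T` and blocks `B`, where `x ≤ b` is incidence: two points
lie on a common block, and on only one. -/
structure IsLinearSpace (T B : Finset α) : Prop where
  exists_block : ∀ x ∈ T, ∀ y ∈ T, x ≠ y → ∃ b ∈ B, x ≤ b ∧ y ≤ b
  block_unique : ∀ b ∈ B, ∀ b' ∈ B, ∀ x ∈ T, ∀ y ∈ T, x ≠ y → x ≤ b → y ≤ b → x ≤ b' → y ≤ b' →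
    b = b'

theorem IsLinearSpace.mono (h : IsLinearSpace T B) (hS : S ⊆ T) : IsLinearSpace S B where
  exists_block x hx y hy := h.exists_block x (hS hx) y (hS hy)
  block_unique b hb b' hb' x hx y hy := h.block_unique b hb b' hb' x (hS hx) y (hS hy)

open Classical in
/-- The points of `S` on no block of `G`. -/
noncomputable def uncovered (S G : Finset α) : Finset α := S.filter fun x => ∀ g ∈ G, ¬x ≤ g

theorem mem_uncovered : x ∈ uncovered S G ↔ x ∈ S ∧ ∀ g ∈ G, ¬x ≤ g := by simp [uncovered]

theorem uncovered_subset : uncovered S G ⊆ S := fun _ hx => (mem_uncovered.1 hx).1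

theorem uncovered_eq_empty_iff : uncovered S G = ∅ ↔ ∀ x ∈ S, ∃ g ∈ G, x ≤ g := by
  simp [uncovered, filter_eq_empty_iff]

theorem uncovered_erase [DecidableEq α] : uncovered (S.erase x) G = (uncovered S G).erase x := by
  ext
  simp only [mem_uncovered, mem_erase, and_assoc]

theorem trace_erase [DecidableEq α] : trace (S.erase x) b = (trace S b).erase x := by
  ext
  simp only [mem_trace, mem_erase, and_assoc]

theorem card_trace_erase_add_one [DecidableEq α] (hx : x ∈ S) (hxb : x ≤ b) :
    #(trace (S.erase x) b) + 1 = #(trace S b) := by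
  rw [trace_erase, card_erase_add_one (mem_trace.2 ⟨hx, hxb⟩)]

theorem card_trace_add_card_uncovered_insert [DecidableEq α] :
    #(trace (uncovered S G) b) + #(uncovered S (insert b G)) = #(uncovered S G) := by
  classical
  have h : uncovered S (insert b G) = (uncovered S G).filter (¬· ≤ b) := by
    ext
    simp only [mem_uncovered, forall_mem_insert, mem_filter]
    tauto
  rw [h, trace, card_filter_add_card_filter_not]

namespace IsLinearSpace

variable (h : IsLinearSpace T B)
include h

theorem card_trace_trace_le_one {b' : α} (hb : b ∈ B) (hb' : b' ∈ B) (hne : b ≠ b') :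
    #(trace (trace T b) b') ≤ 1 := by
  refine card_le_one.2 fun x hx y hy => ?_
  simp only [mem_trace] at hx hy
  by_contra hxy
  exact hne (h.block_unique b hb b' hb' x hx.1.1 y hy.1.1 hxy hx.1.2 hy.1.2 hx.2 hy.2)

theorem sum_card_trace (hS : S ⊆ T) (hx : x ∈ T) (hxS : x ∉ S) [DecidablePred (x ≤ ·)] :
    ∑ b ∈ B with x ≤ b, #(trace S b) = #S := by
  classical
  rw [← card_biUnion]
  · congr 1
    ext y
    simp only [mem_biUnion, mem_filter, mem_trace]
    constructor
    · rintro ⟨b, -, hy, -⟩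
      exact hy
    · intro hy
      obtain ⟨b, hb, hxb, hyb⟩ := h.exists_block x hx y (hS hy) (by rintro rfl; exact hxS hy)
      exact ⟨b, ⟨hb, hxb⟩, hy, hyb⟩
  · intro b hb b' hb' hne
    rw [mem_coe, mem_filter] at hb hb'
    refine disjoint_left.2 fun y hy hy' => hne ?_
    rw [mem_trace] at hy hy'
    exact h.block_unique b hb.1 b' hb'.1 x hx y (hS hy.1) (by rintro rfl; exact hxS hy.1) hb.2 hy.2
      hb'.2 hy'.2

theorem card_trace_le_card_trace_uncovered_add (hS : S ⊆ T) (hG : G ⊆ B) (hb : b ∈ B)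
    (hbG : b ∉ G) : #(trace S b) ≤ #(trace (uncovered S G) b) + #G := by
  classical
  have hsub : trace S b ⊆ trace (uncovered S G) b ∪ G.biUnion fun g => trace (trace T b) g := by
    intro y hy
    obtain ⟨hyS, hyb⟩ := mem_trace.1 hy
    simp only [mem_union, mem_biUnion, mem_trace, mem_uncovered]
    by_cases hyG : ∀ g ∈ G, ¬y ≤ g
    · exact Or.inl ⟨⟨hyS, hyG⟩, hyb⟩
    · push Not at hyG
      obtain ⟨g, hg, hyg⟩ := hyG
      exact Or.inr ⟨g, hg, ⟨hS hyS, hyb⟩, hyg⟩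
  have hunion := card_biUnion_le_card_mul G (fun g => trace (trace T b) g) 1 fun g hg =>
    h.card_trace_trace_le_one hb (hG hg) (by rintro rfl; exact hbG hg)
  have := (card_le_card hsub).trans (card_union_le _ _)
  omega

theorem sum_card_trace_add_card_uncovered_le (hG : G ⊆ B) :
    ∑ g ∈ G, #(trace T g) + #(uncovered T G) ≤ #T + (#G).choose 2 := by
  classical
  induction G using Finset.induction_on with
  | empty => simpa using card_le_card uncovered_subset
  | insert g G hg ih =>
    have := ih ((subset_insert g G).trans hG)
    have := h.card_trace_le_card_trace_uncovered_add Subset.rfl ((subset_insert g G).trans hG)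
      (hG (mem_insert_self g G)) hg
    have := card_trace_add_card_uncovered_insert (S := T) (G := G) (b := g)
    rw [sum_insert hg, card_insert_of_notMem hg, Nat.choose_succ_succ', Nat.choose_one_right,
      one_add_one_eq_two]
    omega

end IsLinearSpace

theorem exists_subset_card_le_forall_card_uncovered_add_le (T B : Finset α) (n : ℕ) :
    ∃ G ⊆ B, #G ≤ n ∧ ∀ d ∈ B, #(uncovered T G) + n * #(trace (uncovered T G) d) ≤ #T := by
  classical
  induction n with
  | zero => exact ⟨∅, empty_subset B, le_rfl, fun d _ => by
      simpa only [zero_mul, add_zero] using card_le_card uncovered_subset⟩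
  | succ n ih =>
    obtain ⟨G, hGB, hGn, hG⟩ := ih
    obtain rfl | hB := B.eq_empty_or_nonempty
    · exact ⟨∅, empty_subset _, Nat.zero_le _, fun d hd => absurd hd (notMem_empty d)⟩
    -- the greedy choice: `g` covers as many uncovered points as possible
    obtain ⟨g, hg, hmax⟩ := exists_max_image B (fun b => #(trace (uncovered T G) b)) hB
    refine ⟨insert g G, insert_subset hg hGB, (card_insert_le g G).trans (by omega),
      fun d hd => ?_⟩
    have hsub : uncovered T (insert g G) ⊆ uncovered T G := fun x hx =>
      mem_uncovered.2 ⟨(mem_uncovered.1 hx).1,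
        fun b hb => (mem_uncovered.1 hx).2 b (mem_insert_of_mem hb)⟩
    have hle : #(trace (uncovered T (insert g G)) d) ≤ #(trace (uncovered T G) g) :=
      (card_le_card (trace_mono_left hsub)).trans (hmax d hd)
    have hcard := card_trace_add_card_uncovered_insert (S := T) (G := G) (b := g)
    have := hG g hg
    have := Nat.mul_le_mul_left n hle
    rw [add_mul, one_mul]
    omega

theorem sub_one_sq_add_two_mul_le (c : ℕ) : (c - 1) ^ 2 + 2 * c ≤ c ^ 2 + 1 := by
  cases c with
  | zero => simp
  | succ s =>
    rw [Nat.add_sub_cancel]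
    exact (by ring : s ^ 2 + 2 * (s + 1) = (s + 1) ^ 2 + 1).le

theorem lt_of_sq_add_le {q t : ℕ}
    (h : q ^ 2 + q + 1 ≤ t + (t - 1) ^ 2) : q < t := by
  by_contra! ht
  have : (t - 1) ^ 2 ≤ q ^ 2 := Nat.pow_le_pow_left (by omega) 2
  omega

theorem lt_of_sq_add_le_of_lt {q t c : ℕ} (hq : 3 ≤ q) (ht : t < 2 * q)
    (h : q ^ 2 + q + 1 + c ≤ t + (c - 1) ^ 2 + t) : q < c := by
  have := sub_one_sq_add_two_mul_le c
  by_contra! hc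
  zify at *
  nlinarith [mul_nonneg (show (0 : ℤ) ≤ q - c by omega) (show (0 : ℤ) ≤ q + c - 3 by omega)]

theorem sub_one_le_of_sq_add_le {q t c : ℕ} (ht : t + 20 ≤ 3 * q)
    (h : q ^ 2 + q + 1 + 2 * c ≤ t + (c - 1) ^ 2 + 2 * t) : q - 1 ≤ c := by
  have := sub_one_sq_add_two_mul_le c
  by_contra! hc
  obtain ⟨p, rfl⟩ : ∃ p, q = c + 2 + p := ⟨q - c - 2, by omega⟩
  zify at *
  nlinarith [sq_nonneg ((p : ℤ) - 2)]

section Covering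

variable [DecidableEq α] [DecidableLE α] (h : IsLinearSpace T B)
variable (hQ : ∀ x ∈ T, q ^ 2 + q + 1 ≤ #T + ∑ b ∈ B with x ≤ b, #(trace (T.erase x) b) ^ 2)
include h hQ

theorem IsLinearSpace.exists_uncovered_eq_empty (hT : #T + 20 ≤ 3 * q) :
    ∃ G ⊆ B, #G ≤ 3 ∧ uncovered T G = ∅ := by
  obtain ⟨G, hGB, hG3, hG⟩ := exists_subset_card_le_forall_card_uncovered_add_le T B 3
  refine ⟨G, hGB, hG3, not_nonempty_iff_eq_empty.1 ?_⟩
  rintro ⟨x, hx⟩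
  obtain ⟨hxT, hxG⟩ := mem_uncovered.1 hx
  set U := uncovered T G
  obtain ⟨m, hm⟩ : ∃ m, m = (#T - #U) / 3 := ⟨_, rfl⟩
  have term_le : ∀ b ∈ B.filter (x ≤ ·), #(trace (T.erase x) b) ^ 2 ≤
      6 * #(trace (T.erase x) b) + m * #(trace (U.erase x) b) := by
    intro b hb
    obtain ⟨hb, hxb⟩ := mem_filter.1 hb
    have lower : #(trace (U.erase x) b) ≤ #(trace (T.erase x) b) :=
      card_le_card (trace_mono_left (erase_subset_erase x uncovered_subset))
    have upper := h.card_trace_le_card_trace_uncovered_add (erase_subset x T) hGB hb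
      fun hbG => hxG b hbG hxb
    rw [uncovered_erase] at upper
    have := hG b hb
    have := card_trace_erase_add_one hx hxb
    have hrm : #(trace (U.erase x) b) ≤ m := by omega
    generalize #(trace (U.erase x) b) = r at *
    generalize #(trace (T.erase x) b) = s at *
    nlinarith
  have hsum := (hQ x hxT).trans (Nat.add_le_add_left (sum_le_sum term_le) _)
  rw [sum_add_distrib, ← mul_sum, ← mul_sum,
    h.sum_card_trace (erase_subset x T) hxT (notMem_erase x T),
    h.sum_card_trace ((erase_subset x U).trans uncovered_subset) hxT (notMem_erase x U),
    card_erase_of_mem hxT, card_erase_of_mem hx] at hsum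
  have hU : 3 * m + #U ≤ #T := by
    have : #U ≤ #T := card_le_card uncovered_subset
    omega
  have hmU : m * (#U - 1) ≤ m * #U := Nat.mul_le_mul_left m (Nat.sub_le _ 1)
  have amgm : 12 * (m * #U) ≤ #T ^ 2 := by
    zify at hU ⊢
    nlinarith [sq_nonneg ((#U : ℤ) - 3 * m)]
  have hTsq : (#T + 20) ^ 2 ≤ (3 * q) ^ 2 := Nat.pow_le_pow_left hT 2
  have hT6 : 6 * (#T - 1) ≤ 6 * #T := by omega
  zify at *
  nlinarith [sq_nonneg ((q : ℤ) - 20)]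

theorem IsLinearSpace.add_le_of_private_point {x : α} (hG : G ⊆ B) (hcov : uncovered T G = ∅)
    (hg : g ∈ G) (hx : x ∈ T) (hxg : x ≤ g) (hpriv : ∀ b ∈ G, x ≤ b → b = g) :
    q ^ 2 + q + 1 + (#G - 1) * #(trace T g) ≤ #T + (#(trace T g) - 1) ^ 2 + (#G - 1) * #T := by
  have hgB : g ∈ B.filter (x ≤ ·) := mem_filter.2 ⟨hG hg, hxg⟩
  have other_le : ∀ b ∈ (B.filter (x ≤ ·)).erase g, #(trace (T.erase x) b) ≤ #G - 1 := by
    intro b hb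
    obtain ⟨hbg, hb⟩ := mem_erase.1 hb
    obtain ⟨hb, hxb⟩ := mem_filter.1 hb
    have := h.card_trace_le_card_trace_uncovered_add (erase_subset x T)
      ((erase_subset g G).trans hG) hb fun hbG => hbg (hpriv b (mem_of_mem_erase hbG) hxb)
    have hempty : trace (uncovered (T.erase x) (G.erase g)) b = ∅ := by
      refine eq_empty_of_forall_notMem fun y hy => ?_
      simp only [mem_trace, mem_uncovered, mem_erase] at hy
      obtain ⟨⟨⟨hyx, hyT⟩, hyG⟩, hyb⟩ := hy
      have hyg : y ≤ g := by
        obtain ⟨g', hg', hyg'⟩ := uncovered_eq_empty_iff.1 hcov y hyT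
        by_contra hyg
        exact hyG g' ⟨by rintro rfl; exact hyg hyg', hg'⟩ hyg'
      exact hbg (h.block_unique b hb g (hG hg) y hyT x hx hyx hyb hxb hyg hxg)
    rwa [hempty, card_empty, zero_add, card_erase_of_mem hg] at this
  have hsum := h.sum_card_trace (erase_subset x T) hx (notMem_erase x T)
  have hsq : ∑ b ∈ (B.filter (x ≤ ·)).erase g, #(trace (T.erase x) b) ^ 2 ≤
      (#G - 1) * ∑ b ∈ (B.filter (x ≤ ·)).erase g, #(trace (T.erase x) b) := by
    rw [mul_sum]
    exact sum_le_sum fun b hb => (sq _).trans_le (Nat.mul_le_mul_right _ (other_le b hb))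
  have hineq := hQ x hx
  have hcard := card_trace_erase_add_one hx hxg
  rw [← add_sum_erase _ _ hgB] at hsum hineq
  have hT : (#G - 1) * #T = (#G - 1) * #(trace T g) + (#G - 1) *
      ∑ b ∈ (B.filter (x ≤ ·)).erase g, #(trace (T.erase x) b) := by
    rw [← card_erase_add_one hx, ← hsum, ← hcard]
    ring
  rw [← hcard, Nat.add_sub_cancel] at *
  omega

theorem IsLinearSpace.exists_minimal_cover (hT : #T + 20 ≤ 3 * q) :
    ∃ G ⊆ B, #G ≤ 3 ∧ uncovered T G = ∅ ∧ ∀ g ∈ G,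
      q ^ 2 + q + 1 + (#G - 1) * #(trace T g) ≤ #T + (#(trace T g) - 1) ^ 2 + (#G - 1) * #T := by
  obtain ⟨G₀, hG₀B, hG₀3, hcov₀⟩ := h.exists_uncovered_eq_empty hQ hT
  obtain ⟨G, hGG₀, hcov, hmin⟩ :=
    exists_minimal_le_of_wellFoundedLT (fun G => uncovered T G = ∅) G₀ hcov₀
  have hGB : G ⊆ B := hGG₀.trans hG₀B
  refine ⟨G, hGB, (card_le_card hGG₀).trans hG₀3, hcov, fun g hg => ?_⟩
  have hprivate : (uncovered T (G.erase g)).Nonempty :=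
    nonempty_iff_ne_empty.2 fun he => notMem_erase g G (hmin he (erase_subset g G) hg)
  obtain ⟨x, hx⟩ := hprivate
  obtain ⟨hxT, hxG⟩ := mem_uncovered.1 hx
  have hpriv : ∀ b ∈ G, x ≤ b → b = g := fun b hb hxb => by
    by_contra hbg
    exact hxG b (mem_erase.2 ⟨hbg, hb⟩) hxb
  have hxg : x ≤ g := by
    obtain ⟨b, hb, hxb⟩ := uncovered_eq_empty_iff.1 hcov x hxT
    exact hpriv b hb hxb ▸ hxb
  exact h.add_le_of_private_point hQ hGB hcov hg hxT hxg hpriv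

theorem IsLinearSpace.exists_block_or_exists_two_blocks (hB : ∀ b ∈ B, #(trace T b) ≤ q + 1)
    (hT : #T + 20 ≤ 3 * q) (hne : T.Nonempty) :
    (∃ a ∈ B, (∀ x ∈ T, x ≤ a) ∧ #T = q + 1) ∨
      ∃ a ∈ B, ∃ b ∈ B, a ≠ b ∧ (∀ x ∈ T, x ≤ a ∨ x ≤ b) ∧ 2 * q ≤ #T := by
  obtain ⟨G, hGB, hG3, hcov, hG⟩ := h.exists_minimal_cover hQ hT
  have hcovered := uncovered_eq_empty_iff.1 hcov
  have hsum := h.sum_card_trace_add_card_uncovered_le hGB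
  obtain hG0 | hG1 | hG2 | hG3 : #G = 0 ∨ #G = 1 ∨ #G = 2 ∨ #G = 3 := by omega
  · obtain ⟨x, hx⟩ := hne
    obtain ⟨g, hg, -⟩ := hcovered x hx
    simp [card_eq_zero.1 hG0] at hg
  · obtain ⟨a, rfl⟩ := card_eq_one.1 hG1
    have ha := hG a (mem_singleton_self a)
    have hall : ∀ x ∈ T, x ≤ a := fun x hx => by simpa using hcovered x hx
    have haq := hB a (hGB (mem_singleton_self a))
    refine Or.inl ⟨a, hGB (mem_singleton_self a), hall, ?_⟩
    have htrace : trace T a = T :=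
      trace_subset.antisymm fun x hx => mem_trace.2 ⟨hx, hall x hx⟩
    rw [htrace] at ha haq
    simp only [hG1, Nat.sub_self, zero_mul, add_zero] at ha
    exact haq.antisymm (lt_of_sq_add_le ha)
  · obtain ⟨a, b, hab, rfl⟩ := card_eq_two.1 hG2
    have ha := hG a (by simp)
    have hb := hG b (by simp)
    refine Or.inr ⟨a, hGB (by simp), b, hGB (by simp), hab,
      fun x hx => by simpa using hcovered x hx, ?_⟩
    rw [sum_pair hab, hcov, hG2, Nat.choose_self, card_empty] at hsum
    simp only [hG2, Nat.add_one_sub_one, one_mul] at ha hb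
    by_contra! hlt
    have := lt_of_sq_add_le_of_lt (by omega) hlt ha
    have := lt_of_sq_add_le_of_lt (by omega) hlt hb
    omega
  · have large : ∀ g ∈ G, q - 1 ≤ #(trace T g) := fun g hg =>
      sub_one_le_of_sq_add_le hT (by simpa only [hG3] using hG g hg)
    have := card_nsmul_le_sum _ _ _ large
    rw [hG3, smul_eq_mul] at this
    rw [hG3, show Nat.choose 3 2 = 3 from rfl] at hsum
    omega

end Covering

end LinearSpaces

/-- A cap `C` in the subspace `D` which is complete there: each point of `D` off `C` lies on a
chord of `C`. -/
structure IsCompleteCapIn {F V : Type*} [Field F] [AddCommGroup V] [Module F V]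
    (C : Finset (Submodule F V)) (D : Submodule F V) : Prop where
  isPointCap : IsPointCap C
  le : ∀ P ∈ C, P ≤ D
  exists_onChord : ∀ N : Submodule F V, finrank F N = 1 → N ≤ D → N ∉ C → ∃ A B, OnChord C A B N

section TangentsOfASolid

variable {F V : Type*} [Field F] [AddCommGroup V] [Module F V]
variable {C : Finset (Submodule F V)} {D P R X l m b : Submodule F V}

theorem IsCompleteCapIn.trace_eq (h : IsCompleteCapIn C D) : trace C D = C :=
  trace_subset.antisymm fun P hP => mem_trace.2 ⟨hP, h.le P hP⟩

theorem sum_card_tangentPoints [DecidableEq (Submodule F V)] (S : Finset (Submodule F V)) :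
    ∑ R ∈ S, #(tangentPoints C R) = ∑ X ∈ C, #{R ∈ S | X ∈ tangentPoints C R} := by
  refine (sum_congr rfl fun R _ => ?_).trans
    (sum_card_bipartiteAbove_eq_sum_card_bipartiteBelow fun R X => X ∈ tangentPoints C R)
  rw [bipartiteAbove, filter_mem_eq_inter, inter_eq_right.2 tangentPoints_subset]

variable [Finite V]

theorem trace_tangents (h : b ≤ D) : trace (tangents C P D) b = tangents C P b := by
  ext l
  simp only [mem_trace, mem_tangents, mem_flats]
  exact ⟨fun hl => ⟨⟨hl.1.1.1, hl.2, hl.1.1.2.2⟩, hl.1.2⟩,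
    fun hl => ⟨⟨⟨hl.1.1, hl.1.2.1.trans h, hl.1.2.2⟩, hl.2⟩, hl.1.2.1⟩⟩

theorem filter_le_flats (h : P ≤ l) {n : ℕ} [DecidablePred (l ≤ ·)] :
    (flats P D n).filter (l ≤ ·) = flats l D n := by
  ext b
  simp only [mem_filter, mem_flats]
  exact ⟨fun hb => ⟨hb.2, hb.1.2⟩, fun hb => ⟨⟨h.trans hb.1, hb.2⟩, hb.1⟩⟩

theorem isLinearSpace_flats (hP : finrank F P = 1) :
    IsLinearSpace (flats P D 2) (flats P D 3) := by
  have hsup : ∀ l ∈ flats P D 2, ∀ m ∈ flats P D 2, l ≠ m → l ⊔ m ∈ flats P D 3 := by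
    intro l hl m hm hne
    obtain ⟨hPl, hlD, hl2⟩ := mem_flats.1 hl
    obtain ⟨hPm, hmD, hm2⟩ := mem_flats.1 hm
    exact mem_flats.2 ⟨hPl.trans le_sup_left, sup_le hlD hmD,
      finrank_sup_of_ne_of_le hPl hPm hP hl2 hm2 hne⟩
  refine ⟨fun l hl m hm hne => ⟨l ⊔ m, hsup l hl m hm hne, le_sup_left, le_sup_right⟩,
    fun b hb b' hb' l hl m hm hne hlb hmb hlb' hmb' => ?_⟩
  have hlm := (mem_flats.1 (hsup l hl m hm hne)).2.2
  rw [← Submodule.eq_of_le_of_finrank_eq (sup_le hlb hmb) (hlm.trans (mem_flats.1 hb).2.2.symm),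
    ← Submodule.eq_of_le_of_finrank_eq (sup_le hlb' hmb') (hlm.trans (mem_flats.1 hb').2.2.symm)]

theorem IsPointCap.isLinearSpace_tangents (hC : IsPointCap C) (hP : P ∈ C) :
    IsLinearSpace (tangents C P D) (flats P D 3) :=
  (isLinearSpace_flats (hC.finrank_eq_one P hP)).mono tangents_subset

theorem IsPointCap.sum_card_tangents (hC : IsPointCap C) (hP : P ∈ C) (hX : X ∈ C) (hPX : P ≠ X)
    (hle : P ⊔ X ≤ D) : ∑ b ∈ flats (P ⊔ X) D 3, #(tangents C P b) = #(tangents C P D) := by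
  classical
  have hP1 := hC.finrank_eq_one P hP
  have hline : P ⊔ X ∈ flats P D 2 :=
    mem_flats.2 ⟨le_sup_left, hle, finrank_sup_of_ne hP1 (hC.finrank_eq_one X hX) hPX⟩
  have hnot : P ⊔ X ∉ tangents C P D := fun h =>
    hPX ((mem_tangents.1 h).2 X hX le_sup_right).symm
  rw [← (isLinearSpace_flats hP1).sum_card_trace tangents_subset hline hnot,
    filter_le_flats le_sup_left]
  exact sum_congr rfl fun b hb => by rw [trace_tangents (mem_flats.1 hb).2.1]

theorem card_tangents_le_card_filter_mem_tangentPoints [DecidableEq (Submodule F V)]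
    (hC : IsPointCap C) (hP : P ∈ C) (hl : l ∈ tangents C P D) (hX : X ∈ C) (hXP : X ≠ P)
    (hlb : l ≤ b) (hb : finrank F b = 3) :
    #(tangents C X b) ≤ #{R ∈ (flats ⊥ l 1).erase P | X ∈ tangentPoints C R} := by
  obtain ⟨hlD, htan⟩ := mem_tangents.1 hl
  obtain ⟨-, -, hl2⟩ := mem_flats.1 hlD
  have hX1 := hC.finrank_eq_one X hX
  have hXl : ¬X ≤ l := fun hle => hXP (htan X hX hle)
  have hinf : ∀ m ∈ tangents C X b, finrank F ↥(m ⊓ l) = 1 ∧ X ⊔ m ⊓ l = m := by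
    intro m hm
    obtain ⟨hXm, hmb, hm2⟩ := mem_flats.1 (tangents_subset hm)
    have hml : finrank F ↥(m ⊓ l) = 1 :=
      finrank_inf_of_ne hmb hlb hm2 hl2 hb (by rintro rfl; exact hXl hXm)
    exact ⟨hml, sup_eq_of_ne hX1 hml (fun he => hXl (he.le.trans inf_le_right)) hm2 hXm inf_le_left⟩
  refine card_le_card_of_injOn (· ⊓ l) (fun m hm => ?_) fun m hm m' hm' heq => ?_
  · obtain ⟨hml, hsup⟩ := hinf m hm
    have hmtan := (mem_tangents.1 hm).2
    simp only [mem_coe, mem_filter, mem_erase, mem_flats, bot_le, inf_le_right, hml, true_and,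
      and_true, mem_tangentPoints, hX, hsup]
    exact ⟨fun he => hXP (hmtan P hP (he ▸ inf_le_left)).symm, hmtan⟩
  · rw [← (hinf m hm).2, ← (hinf m' hm').2]
    exact congrArg (X ⊔ ·) heq

theorem IsPointCap.sum_card_trace_tangents_erase [DecidableEq (Submodule F V)]
    (hC : IsPointCap C) (hP : P ∈ C) (hl : l ∈ tangents C P D) :
    ∑ b ∈ flats l D 3, #(trace ((tangents C P D).erase l) b) + 1 = #(tangents C P D) := by
  classical
  rw [← filter_le_flats (mem_flats.1 (tangents_subset hl)).1,
    (hC.isLinearSpace_tangents hP).sum_card_trace (erase_subset _ _) hl (notMem_erase _ _),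
    card_erase_add_one hl]

theorem IsPointCap.card_tangents_eq_card_tangents [Finite F] (hC : IsPointCap C) (hP : P ∈ C)
    (hX : X ∈ C) (hPb : P ≤ b) (hXb : X ≤ b) (hb : finrank F b = 3) :
    #(tangents C X b) = #(tangents C P b) := by
  cases nonempty_fintype F
  have countP := hC.card_tangents_add_card_trace_of_finrank_eq_three hP hPb hb
  have countX := hC.card_tangents_add_card_trace_of_finrank_eq_three hX hXb hb
  omega

variable [Fintype F]

local notation "q" => Fintype.card F

theorem IsCompleteCapIn.card_tangents_add_card (h : IsCompleteCapIn C D) (hD : finrank F D = 4)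
    (hP : P ∈ C) : #(tangents C P D) + #C = q ^ 2 + q + 2 := by
  have count := h.isPointCap.card_tangents_add_card_trace hP (h.le P hP)
  rwa [h.trace_eq, card_flats_of_finrank_add_three (h.le P hP)
    (h.isPointCap.finrank_eq_one P hP) hD] at count

theorem IsCompleteCapIn.exists_line_card_add_card_tangentPoints_le [CharP F 2]
    (h : IsCompleteCapIn C D) (hR : finrank F R = 1) (hRD : R ≤ D) (hRC : R ∉ C) :
    ∃ l ≤ D, finrank F l = 2 ∧ #C + #(tangentPoints C R) ≤ q * #(flats l D 3) + 2 := by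
  obtain ⟨A, B, hAB⟩ := h.exists_onChord R hR hRD hRC
  have hA := h.le A hAB.left_mem
  have hB := h.le B hAB.right_mem
  have bound := hAB.card_trace_add_card_trace_tangentPoints_le h.isPointCap hA hB
  have htrace : trace (tangentPoints C R) D = tangentPoints C R :=
    trace_subset.antisymm fun P hP => mem_trace.2 ⟨hP, h.le P (tangentPoints_subset hP)⟩
  rw [h.trace_eq, htrace] at bound
  exact ⟨A ⊔ B, sup_le hA hB, finrank_sup_of_ne (h.isPointCap.finrank_eq_one A hAB.left_mem)
    (h.isPointCap.finrank_eq_one B hAB.right_mem) hAB.ne, bound⟩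

theorem IsCompleteCapIn.card_add_card_tangentPoints_le_of_finrank_eq_four [CharP F 2]
    (h : IsCompleteCapIn C D) (hD : finrank F D = 4) (hR : finrank F R = 1) (hRD : R ≤ D)
    (hRC : R ∉ C) : #C + #(tangentPoints C R) ≤ q ^ 2 + q + 2 := by
  obtain ⟨l, hlD, hl, bound⟩ := h.exists_line_card_add_card_tangentPoints_le hR hRD hRC
  rw [card_flats_of_finrank_add_two hlD hl hD] at bound
  linarith

theorem card_points_erase (hP : finrank F P = 1) (hPl : P ≤ l) (hl : finrank F l = 2)
    [DecidableEq (Submodule F V)] : #((flats ⊥ l 1).erase P) = q := by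
  have hline : #(flats ⊥ l 1) = q + 1 := card_flats_of_finrank_add_two bot_le (finrank_bot F V) hl
  rw [card_erase_of_mem (mem_flats.2 ⟨bot_le, hPl, hP⟩), hline, Nat.add_sub_cancel]

theorem card_filter_mem_tangentPoints_self [DecidableEq (Submodule F V)] (hC : IsPointCap C)
    (hP : P ∈ C) (hl : l ∈ tangents C P D) :
    #{R ∈ (flats ⊥ l 1).erase P | P ∈ tangentPoints C R} = q := by
  obtain ⟨hPl, -, hl2⟩ := mem_flats.1 (tangents_subset hl)
  have hP1 := hC.finrank_eq_one P hP
  rw [filter_true_of_mem fun R hR => ?_, card_points_erase hP1 hPl hl2]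
  obtain ⟨hRP, hR⟩ := mem_erase.1 hR
  obtain ⟨-, hRl, hR1⟩ := mem_flats.1 hR
  rw [mem_tangentPoints, sup_eq_of_ne hP1 hR1 hRP.symm hl2 hPl hRl]
  exact ⟨hP, (mem_tangents.1 hl).2⟩

theorem IsPointCap.sum_card_trace_mul_card_tangents_le [DecidableEq (Submodule F V)]
    (hC : IsPointCap C) (hCD : trace C D = C) (hP : P ∈ C) (hl : l ∈ tangents C P D) :
    q + ∑ b ∈ flats l D 3, (#(trace C b) - 1) * #(tangents C P b) ≤
      ∑ R ∈ (flats ⊥ l 1).erase P, #(tangentPoints C R) := by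
  obtain ⟨hPl, hlD, hl2⟩ := mem_flats.1 (tangents_subset hl)
  have hCl : trace C l = {P} := trace_eq_singleton_of_mem_tangents hP hl
  have plane_le : ∀ b ∈ flats l D 3, (#(trace C b) - 1) * #(tangents C P b) ≤
      ∑ X ∈ trace C b \ trace C l,
        #{R ∈ (flats ⊥ l 1).erase P | X ∈ tangentPoints C R} := by
    intro b hb
    obtain ⟨hlb, -, hb3⟩ := mem_flats.1 hb
    have hcard : #(trace C b \ trace C l) = #(trace C b) - 1 := by
      rw [card_sdiff_of_subset (trace_mono_right hlb), hCl, card_singleton]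
    rw [← hcard]
    refine card_nsmul_le_sum _ _ _ fun X hX => ?_
    rw [hCl, mem_sdiff, mem_trace, mem_singleton] at hX
    obtain ⟨⟨hXC, hXb⟩, hXP⟩ := hX
    rw [← hC.card_tangents_eq_card_tangents hP hXC (hPl.trans hlb) hXb hb3]
    exact card_tangents_le_card_filter_mem_tangentPoints hC hP hl hXC hXP hlb hb3
  have hsum := sum_le_sum plane_le
  rw [sum_flats_sum_trace_sdiff hC.finrank_eq_one hlD hl2, hCD, hCl, sdiff_singleton_eq_erase]
    at hsum
  rw [sum_card_tangentPoints, ← add_sum_erase C _ hP, card_filter_mem_tangentPoints_self hC hP hl]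
  exact Nat.add_le_add_left hsum q

theorem IsPointCap.card_trace_sub_one_mul_card_tangents_add [DecidableEq (Submodule F V)]
    (hC : IsPointCap C) (hP : P ∈ C) (hl : l ∈ tangents C P D) (hb : b ∈ flats l D 3) :
    (#(trace C b) - 1) * #(tangents C P b) + #(trace ((tangents C P D).erase l) b) ^ 2 +
        #(trace ((tangents C P D).erase l) b) =
      q + q * #(trace ((tangents C P D).erase l) b) := by
  obtain ⟨hlb, hbD, hb3⟩ := mem_flats.1 hb
  have hPb := (mem_flats.1 (tangents_subset hl)).1.trans hlb
  have hcard := hC.card_tangents_add_card_trace_of_finrank_eq_three hP hPb hb3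
  have hpos : 0 < #(trace C b) := card_pos.2 ⟨P, mem_trace.2 ⟨hP, hPb⟩⟩
  rw [← trace_tangents hbD, ← card_trace_erase_add_one hl hlb] at hcard ⊢
  generalize #(trace ((tangents C P D).erase l) b) = r at *
  obtain ⟨c, hc⟩ : ∃ c, #(trace C b) = c + 1 := ⟨_, (Nat.succ_pred_eq_of_pos hpos).symm⟩
  rw [hc, Nat.add_sub_cancel]
  rw [show q = c + r by omega]
  ring

/-- Segre's bound is summed over the `q` points of the tangent `l` other than `P`. -/
theorem IsCompleteCapIn.sq_add_le_card_tangents_add_sum_sq [CharP F 2]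
    [DecidableEq (Submodule F V)] (h : IsCompleteCapIn C D) (hD : finrank F D = 4) (hP : P ∈ C)
    (hl : l ∈ tangents C P D) :
    q ^ 2 + q + 1 ≤ #(tangents C P D) +
      ∑ b ∈ flats l D 3, #(trace ((tangents C P D).erase l) b) ^ 2 := by
  have hC := h.isPointCap
  have hP1 := hC.finrank_eq_one P hP
  obtain ⟨hPl, hlD, hl2⟩ := mem_flats.1 (tangents_subset hl)
  have htan := h.card_tangents_add_card hD hP
  have point_le : ∀ R ∈ (flats ⊥ l 1).erase P, #C + #(tangentPoints C R) ≤ q ^ 2 + q + 2 := by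
    intro R hR
    obtain ⟨hRP, hR⟩ := mem_erase.1 hR
    obtain ⟨-, hRl, hR1⟩ := mem_flats.1 hR
    exact h.card_add_card_tangentPoints_le_of_finrank_eq_four hD hR1 (hRl.trans hlD)
      fun hRC => hRP ((mem_tangents.1 hl).2 R hRC hRl)
  have upper := sum_le_card_nsmul _ _ _ point_le
  rw [sum_add_distrib, sum_const, smul_eq_mul, smul_eq_mul, card_points_erase hP1 hPl hl2] at upper
  have lower := hC.sum_card_trace_mul_card_tangents_le h.trace_eq hP hl
  have planes := sum_congr rfl fun b hb => hC.card_trace_sub_one_mul_card_tangents_add hP hl hb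
  simp only [sum_add_distrib, ← mul_sum, sum_const, smul_eq_mul,
    card_flats_of_finrank_add_two hlD hl2 hD] at planes
  rw [← hC.sum_card_trace_tangents_erase hP hl] at htan ⊢
  nlinarith

end TangentsOfASolid

section TwoBlocks

theorem sum_comp_eq_of_forall_ne_le_two {α : Type*} {S : Finset α} {a b : α}
    (d : α → ℕ) (f : ℕ → ℕ) (ha : a ∈ S) (hb : b ∈ S) (hab : a ≠ b) (hda : 2 < d a) (hdb : 2 < d b)
    (hd : ∀ c ∈ S, c ≠ a → c ≠ b → d c ≤ 2) :
    ∑ c ∈ S, f (d c) = f (d a) + f (d b) +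
      (#{c ∈ S | d c = 0} * f 0 + #{c ∈ S | d c = 1} * f 1 + #{c ∈ S | d c = 2} * f 2) := by
  classical
  have hmaps : ∀ c ∈ (S.erase a).erase b, d c ∈ range 3 := fun c hc => by
    simp only [mem_erase] at hc
    exact mem_range.2 (Nat.lt_succ_of_le (hd c hc.2.2 hc.2.1 hc.1))
  have hfilter : ∀ i ≤ 2, ((S.erase a).erase b).filter (d · = i) = S.filter (d · = i) := by
    intro i hi
    ext c
    simp only [mem_filter, mem_erase]
    exact ⟨fun hc => ⟨hc.1.2.2, hc.2⟩,
      fun hc => ⟨⟨by rintro rfl; omega, by rintro rfl; omega, hc.1⟩, hc.2⟩⟩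
  rw [← add_sum_erase S _ ha, ← add_sum_erase _ _ (mem_erase.2 ⟨hab.symm, hb⟩), ← add_assoc,
    ← sum_fiberwise_of_maps_to' hmaps]
  simp only [sum_range_succ, sum_range_zero, zero_add, sum_const, smul_eq_mul]
  rw [hfilter 0 (by omega), hfilter 1 (by omega), hfilter 2 le_rfl]

variable {α : Type*} [LE α] {T B : Finset α} {a b : α} {r q : ℕ}

section

variable [DecidableLE α]

theorem sum_card_trace_mul (f : α → ℕ) :
    ∑ b ∈ B, #(trace T b) * f b = ∑ x ∈ T, ∑ b ∈ B with x ≤ b, f b := by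
  calc ∑ b ∈ B, #(trace T b) * f b = ∑ b ∈ B, ∑ _x ∈ trace T b, f b := by
        simp only [sum_const, smul_eq_mul]
    _ = ∑ x ∈ T, ∑ b ∈ B with x ≤ b, f b := sum_comm' fun b x => by
        simp only [mem_trace, mem_filter]
        tauto

theorem sum_card_trace_of_card_filter (hr : ∀ x ∈ T, #{b ∈ B | x ≤ b} = r) :
    ∑ b ∈ B, #(trace T b) = r * #T := by
  have := sum_card_trace_mul (T := T) (B := B) fun _ => 1
  simp only [mul_one, ← card_eq_sum_ones] at this
  rw [this, sum_congr rfl hr, sum_const, smul_eq_mul, mul_comm]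

end

namespace IsLinearSpace

variable (h : IsLinearSpace T B)
include h

theorem sum_card_trace_sq [DecidableLE α] (hr : ∀ x ∈ T, #{b ∈ B | x ≤ b} = r) :
    ∑ b ∈ B, #(trace T b) ^ 2 + #T = #T * (r + #T) := by
  classical
  have point_sum : ∀ x ∈ T, ∑ b ∈ B with x ≤ b, #(trace T b) + 1 = r + #T := by
    intro x hx
    rw [sum_congr rfl fun b hb => (card_trace_erase_add_one hx (mem_filter.1 hb).2).symm,
      sum_add_distrib, ← card_eq_sum_ones, hr x hx,
      h.sum_card_trace (erase_subset x T) hx (notMem_erase x T), ← card_erase_add_one hx]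
    omega
  rw [← smul_eq_mul, ← sum_const, ← sum_congr rfl point_sum, sum_add_distrib, ← card_eq_sum_ones,
    ← sum_card_trace_mul]
  simp only [sq]

theorem card_trace_le_two (ha : a ∈ B) (hb : b ∈ B) (hcov : ∀ x ∈ T, x ≤ a ∨ x ≤ b) {c : α}
    (hc : c ∈ B) (hca : c ≠ a) (hcb : c ≠ b) : #(trace T c) ≤ 2 := by
  classical
  have bound := h.card_trace_le_card_trace_uncovered_add Subset.rfl (G := {a, b})
    (insert_subset ha (singleton_subset_iff.2 hb)) hc (by simp [hca, hcb])
  have hempty : trace (uncovered T {a, b}) c = ∅ := by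
    refine eq_empty_of_forall_notMem fun x hx => ?_
    obtain ⟨hx, hxG⟩ := mem_uncovered.1 (mem_trace.1 hx).1
    exact (hcov x hx).elim (hxG a (by simp)) (hxG b (by simp))
  rw [hempty, card_empty, zero_add] at bound
  exact bound.trans card_le_two

theorem card_trace_add_card_trace (ha : a ∈ B) (hb : b ∈ B) (hab : a ≠ b)
    (hcov : ∀ x ∈ T, x ≤ a ∨ x ≤ b) :
    #(trace T a) + #(trace T b) = #T + #(trace (trace T a) b) ∧ #(trace (trace T a) b) ≤ 1 := by
  classical
  refine ⟨?_, h.card_trace_trace_le_one ha hb hab⟩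
  have hunion : trace T a ∪ trace T b = T := by
    ext x
    have := hcov x
    simp only [mem_union, mem_trace]
    tauto
  have hinter : trace T a ∩ trace T b = trace (trace T a) b := by
    ext x
    simp only [mem_inter, mem_trace]
    tauto
  rw [← card_union_add_card_inter, hunion, hinter]

theorem card_trace_of_two_blocks (ha : a ∈ B) (hb : b ∈ B) (hab : a ≠ b)
    (hcov : ∀ x ∈ T, x ≤ a ∨ x ≤ b) (hB : ∀ c ∈ B, #(trace T c) ≤ q + 1)
    (hmeet : ∀ c ∈ B, ∀ c' ∈ B, c ≠ c' → #(trace T c) = q + 1 → (trace (trace T c) c').Nonempty)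
    (hT : 2 * q ≤ #T) :
    (#T = 2 * q + 1 ∧ #(trace T a) = q + 1 ∧ #(trace T b) = q + 1) ∨
      (#T = 2 * q ∧ #(trace T a) = q ∧ #(trace T b) = q) ∨
      (#T = 2 * q ∧ (#(trace T a) = q ∧ #(trace T b) = q + 1 ∨
        #(trace T a) = q + 1 ∧ #(trace T b) = q)) := by
  obtain ⟨hsum, hle⟩ := h.card_trace_add_card_trace ha hb hab hcov
  obtain ⟨hsum', -⟩ := h.card_trace_add_card_trace hb ha hab.symm fun x hx => (hcov x hx).symm
  have hmeet_a : #(trace T a) = q + 1 → 0 < #(trace (trace T a) b) := fun he =>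
    card_pos.2 (hmeet a ha b hb hab he)
  have hmeet_b : #(trace T b) = q + 1 → 0 < #(trace (trace T b) a) := fun he =>
    card_pos.2 (hmeet b hb a ha hab.symm he)
  have := hB a ha
  have := hB b hb
  omega

theorem card_filter_card_trace_of_two_blocks [DecidableLE α]
    (hr : ∀ x ∈ T, #{b ∈ B | x ≤ b} = q + 1) (hcard : #B = q ^ 2 + q + 1)
    (hB : ∀ c ∈ B, #(trace T c) ≤ q + 1)
    (hmeet : ∀ c ∈ B, ∀ c' ∈ B, c ≠ c' → #(trace T c) = q + 1 → (trace (trace T c) c').Nonempty)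
    (hq : 3 ≤ q)
    (htwo : ∃ a ∈ B, ∃ b ∈ B, a ≠ b ∧ (∀ x ∈ T, x ≤ a ∨ x ≤ b) ∧ 2 * q ≤ #T) :
    (#T = 2 * q + 1 ∧ #{c ∈ B | #(trace T c) = 0} = 0 ∧ #{c ∈ B | #(trace T c) = 1} + 1 = q) ∨
      (#T = 2 * q ∧ #{c ∈ B | #(trace T c) = 0} + 1 = q ∧ #{c ∈ B | #(trace T c) = 1} = 0) ∨
      (#T = 2 * q ∧ #{c ∈ B | #(trace T c) = 0} = 0 ∧
        #{c ∈ B | #(trace T c) = 1} + 1 = 2 * q) := by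
  obtain ⟨a, ha, b, hb, hab, hcov, hT⟩ := htwo
  have hcases := h.card_trace_of_two_blocks ha hb hab hcov hB hmeet hT
  have moments := fun f : ℕ → ℕ => sum_comp_eq_of_forall_ne_le_two (fun c => #(trace T c)) f ha hb
    hab (by omega) (by omega) fun c hc hca hcb => h.card_trace_le_two ha hb hcov hc hca hcb
  have moment_zero := moments fun _ => 1
  have moment_one := moments fun i => i
  have moment_two := moments fun i => i ^ 2
  have first := sum_card_trace_of_card_filter hr
  have second := h.sum_card_trace_sq hr
  rw [← card_eq_sum_ones, hcard] at moment_zero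
  rw [first] at moment_one
  rw [moment_two] at second
  generalize #{c ∈ B | #(trace T c) = 0} = n₀ at *
  generalize #{c ∈ B | #(trace T c) = 1} = n₁ at *
  generalize #{c ∈ B | #(trace T c) = 2} = n₂ at *
  obtain ⟨hT, hda, hdb⟩ | ⟨hT, hda, hdb⟩ | ⟨hT, ⟨hda, hdb⟩ | ⟨hda, hdb⟩⟩ := hcases <;>
    simp only [hT, hda, hdb] at moment_one second ⊢
  · refine Or.inl ⟨trivial, ?_, ?_⟩ <;> linarith
  · refine Or.inr <| Or.inl ⟨trivial, ?_, ?_⟩ <;> linarith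
  all_goals refine Or.inr <| Or.inr ⟨trivial, ?_, ?_⟩ <;> linarith

end IsLinearSpace

end TwoBlocks

section CapsOfASolid

variable {F V : Type*} [Field F] [Fintype F] [AddCommGroup V] [Module F V] [Finite V]
variable {C : Finset (Submodule F V)} {D E P a b c : Submodule F V} {d n s : ℕ}

/-- The planes of `D` through `P` that contain exactly `d` tangents to `C` at `P`. -/
noncomputable def tangentPlanes (C : Finset (Submodule F V)) (P D : Submodule F V) (d : ℕ) :
    Finset (Submodule F V) :=
  {b ∈ flats P D 3 | #(tangents C P b) = d}

local notation "q" => Fintype.card F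

theorem card_flats_three (hP : finrank F P = 1) (hPD : P ≤ D) (hD : finrank F D = 4) :
    #(flats P D 3) = q ^ 2 + q + 1 := by
  classical
  have through_line : ∀ l ∈ flats P D 2, #{b ∈ flats P D 3 | l ≤ b} = q + 1 := by
    intro l hl
    obtain ⟨hPl, hlD, hl2⟩ := mem_flats.1 hl
    rw [filter_le_flats hPl, card_flats_of_finrank_add_two hlD hl2 hD]
  have in_plane : ∀ b ∈ flats P D 3, #(trace (flats P D 2) b) = q + 1 := by
    intro b hb
    obtain ⟨hPb, hbD, hb3⟩ := mem_flats.1 hb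
    rw [← card_flats_of_finrank_add_two hPb hP hb3]
    congr 1
    ext l
    simp only [mem_trace, mem_flats]
    exact ⟨fun hl => ⟨hl.1.1, hl.2, hl.1.2.2⟩, fun hl => ⟨⟨hl.1, hl.2.1.trans hbD, hl.2.2⟩, hl.2.1⟩⟩
  have count := sum_card_trace_of_card_filter through_line
  rw [sum_const_nat in_plane, card_flats_of_finrank_add_three hPD hP hD, mul_comm] at count
  exact Nat.eq_of_mul_eq_mul_left (Nat.succ_pos _) count

theorem card_tangents_le (hP : finrank F P = 1) (hPb : P ≤ b) (hb : finrank F b = 3) :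
    #(tangents C P b) ≤ q + 1 :=
  card_flats_of_finrank_add_two hPb hP hb ▸ card_le_card tangents_subset

theorem tangents_eq_flats (hP : finrank F P = 1) (hPb : P ≤ b) (hb : finrank F b = 3)
    (hcard : #(tangents C P b) = q + 1) : tangents C P b = flats P b 2 :=
  eq_of_subset_of_card_le tangents_subset
    (card_flats_of_finrank_add_two hPb hP hb ▸ hcard.ge)

theorem trace_trace_tangents_nonempty (hP : finrank F P = 1) (hD : finrank F D = 4)
    (ha : a ∈ flats P D 3) (hb : b ∈ flats P D 3) (hab : a ≠ b)
    (hcard : #(tangents C P a) = q + 1) :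
    (trace (trace (tangents C P D) a) b).Nonempty := by
  obtain ⟨hPa, haD, ha3⟩ := mem_flats.1 ha
  obtain ⟨hPb, hbD, hb3⟩ := mem_flats.1 hb
  have hinf : a ⊓ b ∈ flats P a 2 :=
    mem_flats.2 ⟨le_inf hPa hPb, inf_le_left, finrank_inf_of_ne haD hbD ha3 hb3 hD hab⟩
  rw [trace_tangents haD, tangents_eq_flats hP hPa ha3 hcard]
  exact ⟨a ⊓ b, mem_trace.2 ⟨hinf, inf_le_right⟩⟩

theorem IsCompleteCapIn.two_mul_succ_le_card_tangents (h : IsCompleteCapIn C D)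
    (hD : finrank F D = 4) (hP : P ∈ C) (hE : E ∈ C) (hPE : P ≠ E)
    (hone : #(tangentPlanes C P D 1) = 0) (hzero : #(tangentPlanes C E D 0) = 0) :
    2 * (q + 1) ≤ #(tangents C P D) := by
  have hC := h.isPointCap
  have hle : P ⊔ E ≤ D := sup_le (h.le P hP) (h.le E hE)
  have hline := finrank_sup_of_ne (hC.finrank_eq_one P hP) (hC.finrank_eq_one E hE) hPE
  have two_le : ∀ b ∈ flats (P ⊔ E) D 3, 2 ≤ #(tangents C P b) := by
    intro b hb
    obtain ⟨hPEb, hbD, hb3⟩ := mem_flats.1 hb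
    have hPb := le_sup_left.trans hPEb
    have hEb := le_sup_right.trans hPEb
    have hne_one : #(tangents C P b) ≠ 1 :=
      filter_eq_empty_iff.1 (card_eq_zero.1 hone) (mem_flats.2 ⟨hPb, hbD, hb3⟩)
    have hne_zero : #(tangents C E b) ≠ 0 :=
      filter_eq_empty_iff.1 (card_eq_zero.1 hzero) (mem_flats.2 ⟨hEb, hbD, hb3⟩)
    rw [hC.card_tangents_eq_card_tangents hP hE hPb hEb hb3] at hne_zero
    omega
  calc 2 * (q + 1) = #(flats (P ⊔ E) D 3) * 2 := by
        rw [card_flats_of_finrank_add_two hle hline hD, mul_comm]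
    _ ≤ ∑ b ∈ flats (P ⊔ E) D 3, #(tangents C P b) := card_nsmul_le_sum _ _ _ two_le
    _ = #(tangents C P D) := hC.sum_card_tangents hP hE hPE hle

theorem IsPointCap.dvd_card_mul (hC : IsPointCap C) (hsd : s + d = q + 2)
    (hn : ∀ P ∈ C, #(tangentPlanes C P D d) = n) : s ∣ #C * n := by
  classical
  have through : ∀ P ∈ C, #{b ∈ {b ∈ flats ⊥ D 3 | #(trace C b) = s} | P ≤ b} = n := by
    intro P hP
    rw [← hn P hP]
    congr 1
    ext b
    simp only [tangentPlanes, mem_filter, mem_flats, bot_le, true_and]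
    constructor
    · rintro ⟨⟨⟨hbD, hb3⟩, hs⟩, hPb⟩
      have := hC.card_tangents_add_card_trace_of_finrank_eq_three hP hPb hb3
      exact ⟨⟨hPb, hbD, hb3⟩, by omega⟩
    · rintro ⟨⟨hPb, hbD, hb3⟩, hd⟩
      have := hC.card_tangents_add_card_trace_of_finrank_eq_three hP hPb hb3
      exact ⟨⟨⟨hbD, hb3⟩, by omega⟩, hPb⟩
  rw [mul_comm, ← sum_card_trace_of_card_filter through]
  exact dvd_sum fun b hb => (mem_filter.1 hb).2 ▸ dvd_rfl

theorem le_mul_of_dvd_mul {s m n a b : ℕ} {u v : ℤ} (h : s ∣ m * n) (hm : (m : ℤ) = s * u + a)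
    (hn : (n : ℤ) = s * v - b) (hab : 0 < a * b) : s ≤ a * b := by
  refine Nat.le_of_dvd hab (Int.natCast_dvd_natCast.1 ?_)
  have : ((a * b : ℕ) : ℤ) = s * (u * n + a * v) - (m * n : ℕ) := by
    push_cast
    rw [hm, hn]
    ring
  rw [this]
  exact dvd_sub (dvd_mul_right _ _) (Int.natCast_dvd_natCast.2 h)

section Large

variable [CharP F 2] (h : IsCompleteCapIn C D) (hD : finrank F D = 4)
variable (hcard : Fintype.card F ^ 2 + 22 ≤ #C + 2 * Fintype.card F)
include h hD hcard

theorem IsCompleteCapIn.tangents_cases (hP : P ∈ C) (hne : (tangents C P D).Nonempty) :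
    (∃ a ∈ flats P D 3, (∀ l ∈ tangents C P D, l ≤ a) ∧ #(tangents C P D) = q + 1) ∨
      ∃ a ∈ flats P D 3, ∃ b ∈ flats P D 3, a ≠ b ∧ (∀ l ∈ tangents C P D, l ≤ a ∨ l ≤ b) ∧
        2 * q ≤ #(tangents C P D) := by
  classical
  have hP1 := h.isPointCap.finrank_eq_one P hP
  have htan := h.card_tangents_add_card hD hP
  refine (h.isPointCap.isLinearSpace_tangents hP).exists_block_or_exists_two_blocks
    (fun l hl => ?_) (fun b hb => ?_) (by omega) hne
  · rw [filter_le_flats (mem_flats.1 (tangents_subset hl)).1]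
    exact h.sq_add_le_card_tangents_add_sum_sq hD hP hl
  · obtain ⟨hPb, hbD, hb3⟩ := mem_flats.1 hb
    exact trace_tangents hbD ▸ card_tangents_le hP1 hPb hb3

variable (hq : 32 ≤ Fintype.card F)
include hq

theorem IsCompleteCapIn.two_mul_le_card_tangents (hP : P ∈ C) (hb : b ∈ flats P D 3)
    (hcardb : #(tangents C P b) = 2) : 2 * q ≤ #(tangents C P D) := by
  have hbD := (mem_flats.1 hb).2.1
  have hne : (tangents C P D).Nonempty := by
    rw [← trace_tangents hbD] at hcardb
    exact (card_ne_zero.1 (hcardb.trans_ne two_ne_zero)).mono trace_subset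
  obtain ⟨a, ha, hall, hT⟩ | ⟨-, -, -, -, -, -, hT⟩ := h.tangents_cases hD hcard hP hne
  · have htrace : trace (tangents C P D) a = tangents C P D :=
      trace_subset.antisymm fun l hl => mem_trace.2 ⟨hl, hall l hl⟩
    obtain rfl | hab := eq_or_ne a b
    · rw [← trace_tangents hbD, htrace] at hcardb
      omega
    · have := (h.isPointCap.isLinearSpace_tangents hP).card_trace_trace_le_one ha hb hab
      rw [htrace, trace_tangents hbD] at this
      omega
  · exact hT

theorem IsCompleteCapIn.card_tangentPlanes_cases (hP : P ∈ C) (hT : 2 * q ≤ #(tangents C P D)) :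
    (#(tangents C P D) = 2 * q + 1 ∧ #(tangentPlanes C P D 0) = 0 ∧
        #(tangentPlanes C P D 1) + 1 = q) ∨
      (#(tangents C P D) = 2 * q ∧ #(tangentPlanes C P D 0) + 1 = q ∧
        #(tangentPlanes C P D 1) = 0) ∨
      (#(tangents C P D) = 2 * q ∧ #(tangentPlanes C P D 0) = 0 ∧
        #(tangentPlanes C P D 1) + 1 = 2 * q) := by
  classical
  have hP1 := h.isPointCap.finrank_eq_one P hP
  have htwo := (h.tangents_cases hD hcard hP (card_pos.1 (by omega))).resolve_left
    (by rintro ⟨-, -, -, hT⟩; omega)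
  have trace_eq : ∀ b ∈ flats P D 3, trace (tangents C P D) b = tangents C P b := fun b hb =>
    trace_tangents (mem_flats.1 hb).2.1
  have tangentPlanes_eq : ∀ d,
      tangentPlanes C P D d = {b ∈ flats P D 3 | #(trace (tangents C P D) b) = d} := fun d =>
    filter_congr fun b hb => by rw [trace_eq b hb]
  simp only [tangentPlanes_eq]
  refine (h.isPointCap.isLinearSpace_tangents hP).card_filter_card_trace_of_two_blocks
    (fun l hl => ?_) (card_flats_three hP1 (h.le P hP) hD) (fun b hb => ?_)
    (fun a ha b hb hab hcard => ?_) (by omega) htwo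
  · obtain ⟨hPl, hlD, hl2⟩ := mem_flats.1 (tangents_subset hl)
    rw [filter_le_flats hPl, card_flats_of_finrank_add_two hlD hl2 hD]
  · obtain ⟨hPb, -, hb3⟩ := mem_flats.1 hb
    exact trace_eq b hb ▸ card_tangents_le hP1 hPb hb3
  · exact trace_trace_tangents_nonempty hP1 hD ha hb hab (trace_eq a ha ▸ hcard)

theorem IsCompleteCapIn.card_tangentPlanes_eq (hP : P ∈ C) (hE : E ∈ C)
    (hT : 2 * q ≤ #(tangents C P D)) :
    #(tangentPlanes C P D 0) = #(tangentPlanes C E D 0) ∧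
      #(tangentPlanes C P D 1) = #(tangentPlanes C E D 1) := by
  obtain rfl | hPE := eq_or_ne P E
  · exact ⟨rfl, rfl⟩
  have hTE : #(tangents C E D) = #(tangents C P D) := Nat.add_right_cancel <|
    (h.card_tangents_add_card hD hE).trans (h.card_tangents_add_card hD hP).symm
  have mixed_PE := h.two_mul_succ_le_card_tangents hD hP hE hPE
  have mixed_EP := h.two_mul_succ_le_card_tangents hD hE hP hPE.symm
  have cases_P := h.card_tangentPlanes_cases hD hcard hq hP hT
  have cases_E := h.card_tangentPlanes_cases hD hcard hq hE (hT.trans hTE.ge)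
  omega

theorem IsCompleteCapIn.card_tangents_lt (hP : P ∈ C) : #(tangents C P D) < 2 * q := by
  by_contra! hT
  have hcount := h.card_tangents_add_card hD hP
  have hsq : q ^ 2 = q * q := sq q
  have dvd_zero : q + 2 ∣ #C * #(tangentPlanes C P D 0) :=
    h.isPointCap.dvd_card_mul (add_zero _) fun X hX =>
      (h.card_tangentPlanes_eq hD hcard hq hP hX hT).1.symm
  have dvd_one : q + 1 ∣ #C * #(tangentPlanes C P D 1) :=
    h.isPointCap.dvd_card_mul (add_assoc _ _ _) fun X hX =>
      (h.card_tangentPlanes_eq hD hcard hq hP hX hT).2.symm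
  obtain ⟨hT, -, hone⟩ | ⟨hT, hzero, -⟩ | ⟨hT, -, hone⟩ :=
    h.card_tangentPlanes_cases hD hcard hq hP hT
  · have := le_mul_of_dvd_mul dvd_one (a := 3) (b := 2) (u := q - 2) (v := 1)
      (by push_cast; zify at *; linarith) (by push_cast; omega) (by omega)
    omega
  · have := le_mul_of_dvd_mul dvd_zero (a := 8) (b := 3) (u := q - 3) (v := 1)
      (by push_cast; zify at *; linarith) (by push_cast; omega) (by omega)
    omega
  · have := le_mul_of_dvd_mul dvd_one (a := 4) (b := 3) (u := q - 2) (v := 2)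
      (by push_cast; zify at *; linarith) (by push_cast; omega) (by omega)
    omega

theorem IsCompleteCapIn.card_trace_ne_of_finrank_eq_four (hP : P ∈ C) (hb : b ∈ flats P D 3) :
    #(trace C b) ≠ q := by
  intro hcardb
  obtain ⟨hPb, -, hb3⟩ := mem_flats.1 hb
  have := h.isPointCap.card_tangents_add_card_trace_of_finrank_eq_three hP hPb hb3
  exact (h.card_tangents_lt hD hcard hq hP).not_ge
    (h.two_mul_le_card_tangents hD hcard hq hP hb (by omega))

end Large

end CapsOfASolid

section Extension

variable {F V : Type*} [Field F] [AddCommGroup V] [Module F V]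
variable {C C' : Finset (Submodule F V)} {D N P Q W X p : Submodule F V}

protected theorem IsPointCap.insert [FiniteDimensional F V] [DecidableEq (Submodule F V)]
    (hC : IsPointCap C) (hN : finrank F N = 1) (h : ∀ A ∈ C, ∀ B ∈ C, A ≠ B → ¬N ≤ A ⊔ B) :
    IsPointCap (insert N C) := by
  have hpoint : ∀ P ∈ insert N C, finrank F P = 1 := fun P hP =>
    (mem_insert.1 hP).elim (fun he => he ▸ hN) (hC.finrank_eq_one P)
  refine ⟨hpoint, fun P hP Q hQ R hR hPQ hPR hQR hle => ?_⟩
  have hP' := hpoint P hP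
  have hQ' := hpoint Q hQ
  have hR' := hpoint R hR
  have hQ_le : Q ≤ R ⊔ P := sup_comm P R ▸ le_sup_exchange hP' hQ' hR' hPR hle
  have hP_le : P ≤ Q ⊔ R := le_sup_exchange hQ' hP' hR' hQR (sup_comm P Q ▸ hle)
  obtain rfl | hPC := mem_insert.1 hP
  · exact h Q (mem_of_mem_insert_of_ne hQ hPQ.symm) R (mem_of_mem_insert_of_ne hR hPR.symm) hQR
      hP_le
  obtain rfl | hQC := mem_insert.1 hQ
  · exact h R (mem_of_mem_insert_of_ne hR hQR.symm) P hPC hPR.symm hQ_le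
  obtain rfl | hRC := mem_insert.1 hR
  · exact h P hPC Q hQC hPQ hle
  · exact hC.not_le_sup P hPC Q hQC R hRC hPQ hPR hQR hle

theorem IsPointCap.trace_subset_tangentPoints (hC' : IsPointCap C') (hsub : trace C W ⊆ C')
    (hN : N ∈ C') (hNC : N ∉ C) (hNW : N ≤ W) : trace C W ⊆ tangentPoints C N := by
  intro P hP
  obtain ⟨hPC, hPW⟩ := mem_trace.1 hP
  refine mem_tangentPoints.2 ⟨hPC, fun R hR hle => ?_⟩
  by_contra hRP
  exact hC'.not_le_sup P (hsub hP) N hN R (hsub (mem_trace.2 ⟨hR, hle.trans (sup_le hPW hNW)⟩))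
    (fun he => hNC (he ▸ hPC)) (Ne.symm hRP) (fun he => hNC (he ▸ hR)) hle

variable [Finite V]

theorem IsPointCap.exists_isCompleteCapIn (hC : IsPointCap C) (hCD : ∀ P ∈ C, P ≤ D) :
    ∃ C', C ⊆ C' ∧ IsCompleteCapIn C' D := by
  classical
  obtain ⟨C', hsub, ⟨hC', hC'D⟩, hmax⟩ :=
    (Set.toFinite {S | IsPointCap S ∧ ∀ P ∈ S, P ≤ D}).exists_le_maximal ⟨hC, hCD⟩
  refine ⟨C', hsub, hC', hC'D, fun N hN hND hNC' => ?_⟩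
  by_contra! hchord
  have hcap : IsPointCap (insert N C') := hC'.insert hN fun A hA B hB hAB hle =>
    hchord A B ⟨hA, hB, hAB, hN, hNC', hle⟩
  exact hNC' <| hmax ⟨hcap, (forall_mem_insert _ _ _).2 ⟨hND, hC'D⟩⟩ (subset_insert N C')
    (mem_insert_self N C')

open Classical in
/-- The points of the plane `p`, off the cap `C`, whose addition to the arc `C ∩ p` leaves it an
arc. -/
noncomputable def arcExtensionPoints (C : Finset (Submodule F V)) (p : Submodule F V) :
    Finset (Submodule F V) :=
  (flats ⊥ p 1).filter fun N => N ∉ C ∧ trace C p ⊆ tangentPoints C N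

theorem mem_arcExtensionPoints : N ∈ arcExtensionPoints C p ↔
    (N ≤ p ∧ finrank F N = 1) ∧ N ∉ C ∧ trace C p ⊆ tangentPoints C N := by
  simp [arcExtensionPoints]

theorem IsPointCap.sup_mem_tangents (hC : IsPointCap C) (hN : N ∈ arcExtensionPoints C p)
    (hP : P ∈ trace C p) : P ⊔ N ∈ tangents C P p := by
  obtain ⟨⟨hNp, hN1⟩, hNC, hsub⟩ := mem_arcExtensionPoints.1 hN
  obtain ⟨hPC, hPp⟩ := mem_trace.1 hP
  exact mem_tangents.2 ⟨mem_flats.2 ⟨le_sup_left, sup_le hPp hNp,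
    finrank_sup_of_ne (hC.finrank_eq_one P hPC) hN1 fun he => hNC (he ▸ hPC)⟩,
    (mem_tangentPoints.1 (hsub hP)).2⟩

theorem IsPointCap.card_arcExtensionPoints_le (hC : IsPointCap C) (hP : P ∈ trace C p)
    (hQ : Q ∈ trace C p) (hPQ : P ≠ Q) :
    #(arcExtensionPoints C p) ≤ #(tangents C P p) * #(tangents C Q p) := by
  rw [← card_product]
  refine card_le_card_of_injOn (fun N => (P ⊔ N, Q ⊔ N))
    (fun N hN => mem_product.2 ⟨hC.sup_mem_tangents hN hP, hC.sup_mem_tangents hN hQ⟩)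
    fun N hN M hM hNM => ?_
  obtain ⟨heqP, heqQ⟩ := Prod.mk.inj hNM
  by_contra hne
  have hline : ∀ R ∈ trace C p, R ⊔ N = R ⊔ M → N ⊔ M = R ⊔ N := fun R hR he =>
    sup_eq_of_ne (mem_arcExtensionPoints.1 hN).1.2 (mem_arcExtensionPoints.1 hM).1.2 hne
      (mem_flats.1 (tangents_subset (hC.sup_mem_tangents hN hR))).2.2 le_sup_right
      (he ▸ le_sup_right)
  have hQ_le : Q ≤ P ⊔ N := (le_sup_left.trans (hline Q hQ heqQ).ge).trans (hline P hP heqP).le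
  exact hPQ ((mem_tangents.1 (hC.sup_mem_tangents hN hP)).2 Q (mem_trace.1 hQ).1 hQ_le).symm

theorem IsPointCap.card_mul_le_card_tangentPoints {r m : ℕ} {U : Submodule F V}
    {G : Finset (Submodule F V)} (hC : IsPointCap C) (hUW : U ≤ W) (hU : finrank F U = r)
    (hG : G ⊆ flats U W (r + 1)) (hm : ∀ X ∈ G, m + #(trace C U) ≤ #(trace C X))
    (hsub : ∀ X ∈ G, trace C X ⊆ tangentPoints C N) : #G * m ≤ #(tangentPoints C N) := by
  have hJ : ∀ X ∈ G, m + #(trace (tangentPoints C N) U) ≤ #(trace (tangentPoints C N) X) := by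
    intro X hX
    have hU_le := card_le_card (trace_mono_left (a := U) (tangentPoints_subset (C := C) (N := N)))
    have hX_le : #(trace C X) ≤ #(trace (tangentPoints C N) X) := card_le_card fun P hP =>
      mem_trace.2 ⟨hsub X hX hP, (mem_trace.1 hP).2⟩
    have := hm X hX
    omega
  have := card_mul_add_card_trace_le (hC.mono tangentPoints_subset).finrank_eq_one hUW hU hG hJ
  have := card_le_card (trace_subset (S := tangentPoints C N) (a := W))
  omega

end Extension

section FourSpace

variable {F V : Type*} [Field F] [AddCommGroup V] [Module F V] [Finite V] [Fintype F]
variable {C : Finset (Submodule F V)} {D N P X p : Submodule F V}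

local notation "q" => Fintype.card F

theorem IsPointCap.card_trace_le_of_finrank_eq_four (hC : IsPointCap C) (hP : P ∈ C) (hPX : P ≤ X)
    (hX : finrank F X = 4) : #(trace C X) ≤ q ^ 2 + q + 2 := by
  have := hC.card_tangents_add_card_trace hP hPX
  rw [card_flats_of_finrank_add_three hPX (hC.finrank_eq_one P hP) hX] at this
  omega

theorem IsPointCap.card_arcExtensionPoints_le_four (hC : IsPointCap C) (hp : finrank F p = 3)
    (hcardp : #(trace C p) = q) : #(arcExtensionPoints C p) ≤ 4 := by
  obtain ⟨P, hP, Q, hQ, hPQ⟩ := one_lt_card.1 (hcardp ▸ Fintype.one_lt_card : 1 < #(trace C p))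
  have two_tangents : ∀ R ∈ trace C p, #(tangents C R p) = 2 := fun R hR => by
    have := hC.card_tangents_add_card_trace_of_finrank_eq_three (mem_trace.1 hR).1
      (mem_trace.1 hR).2 hp
    omega
  simpa only [two_tangents P hP, two_tangents Q hQ] using hC.card_arcExtensionPoints_le hP hQ hPQ

variable [CharP F 2]

theorem IsPointCap.exists_mem_arcExtensionPoints (hC : IsPointCap C) (hX : X ∈ flats p D 4)
    (hp : finrank F p = 3) (hcardp : #(trace C p) = q) (hq : 32 ≤ q)
    (hcardX : q ^ 2 + 22 ≤ #(trace C X) + 2 * q) :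
    ∃ N ∈ arcExtensionPoints C p, trace C X ⊆ tangentPoints C N := by
  obtain ⟨hpX, -, hX4⟩ := mem_flats.1 hX
  obtain ⟨C', hsub, hC'⟩ := (hC.mono trace_subset).exists_isCompleteCapIn
    fun P (hP : P ∈ trace C X) => (mem_trace.1 hP).2
  have hsub_p : trace C p ⊆ trace C' p := fun P hP =>
    mem_trace.2 ⟨hsub (trace_mono_right hpX hP), (mem_trace.1 hP).2⟩
  obtain ⟨P, hP⟩ : (trace C p).Nonempty := card_pos.1 (by omega)
  have hne : trace C p ≠ trace C' p := fun he =>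
    hC'.card_trace_ne_of_finrank_eq_four hX4
      (hcardX.trans (Nat.add_le_add_right (card_le_card hsub) _)) hq
      (mem_trace.1 (hsub_p hP)).1 (mem_flats.2 ⟨(mem_trace.1 hP).2, hpX, hp⟩) (he ▸ hcardp)
  obtain ⟨N, hN, hNC⟩ := exists_of_ssubset (hsub_p.ssubset_of_ne hne)
  obtain ⟨hNC', hNp⟩ := mem_trace.1 hN
  have hNC : N ∉ C := fun h => hNC (mem_trace.2 ⟨h, hNp⟩)
  have htan := hC'.isPointCap.trace_subset_tangentPoints hsub hNC' hNC (hNp.trans hpX)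
  exact ⟨N, mem_arcExtensionPoints.2 ⟨⟨hNp, hC'.isPointCap.finrank_eq_one N hNC'⟩, hNC,
    (trace_mono_right hpX).trans htan⟩, htan⟩

theorem IsCompleteCapIn.card_add_card_tangentPoints_le_of_finrank_eq_five
    (h : IsCompleteCapIn C D) (hD : finrank F D = 5) (hN : finrank F N = 1) (hND : N ≤ D)
    (hNC : N ∉ C) : #C + #(tangentPoints C N) ≤ q ^ 3 + q ^ 2 + q + 2 := by
  obtain ⟨l, hlD, hl, bound⟩ := h.exists_line_card_add_card_tangentPoints_le hN hND hNC
  rw [card_flats_of_finrank_add_three hlD hl hD] at bound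
  linarith

variable (h : IsCompleteCapIn C D) (hD : finrank F D = 5) (hpD : p ≤ D) (hp : finrank F p = 3)
  (hq : 32 ≤ Fintype.card F)
  (hcard : Fintype.card F ^ 3 + 44 * Fintype.card F ≤ #C + 2 * Fintype.card F ^ 2)
include h hD hpD hp hq hcard

theorem IsCompleteCapIn.card_filter_large_le_eight (hcardp : #(trace C p) = q) :
    #{X ∈ flats p D 4 | q ^ 2 + 22 ≤ #(trace C X) + 2 * q} ≤ 8 := by
  classical
  set large := {X ∈ flats p D 4 | q ^ 2 + 22 ≤ #(trace C X) + 2 * q}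
  have hcover : large ⊆ (arcExtensionPoints C p).biUnion fun N =>
      {X ∈ large | trace C X ⊆ tangentPoints C N} := by
    intro X hX
    obtain ⟨hXp, hcardX⟩ := mem_filter.1 hX
    obtain ⟨N, hN, hsub⟩ :=
      h.isPointCap.exists_mem_arcExtensionPoints hXp hp hcardp hq hcardX
    exact mem_biUnion.2 ⟨N, hN, mem_filter.2 ⟨hX, hsub⟩⟩
  have htwo : ∀ N ∈ arcExtensionPoints C p, #{X ∈ large | trace C X ⊆ tangentPoints C N} ≤ 2 := by
    intro N hN
    obtain ⟨⟨hNp, hN1⟩, hNC, -⟩ := mem_arcExtensionPoints.1 hN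
    have segre := h.card_add_card_tangentPoints_le_of_finrank_eq_five hD hN1 (hNp.trans hpD) hNC
    have hmul : #{X ∈ large | trace C X ⊆ tangentPoints C N} * (q ^ 2 + 22 - 3 * q) ≤
        #(tangentPoints C N) := by
      refine h.isPointCap.card_mul_le_card_tangentPoints hpD hp
        (fun X hX => (mem_filter.1 (mem_filter.1 hX).1).1) (fun X hX => ?_)
        fun X hX => (mem_filter.1 hX).2
      have := (mem_filter.1 (mem_filter.1 hX).1).2
      omega
    by_contra! hthree
    have := Nat.mul_le_mul_right (q ^ 2 + 22 - 3 * q) hthree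
    omega
  calc #large ≤ #(arcExtensionPoints C p) * 2 :=
        (card_le_card hcover).trans (card_biUnion_le_card_mul _ _ _ htwo)
    _ ≤ 4 * 2 := Nat.mul_le_mul_right 2 (h.isPointCap.card_arcExtensionPoints_le_four hp hcardp)

theorem IsCompleteCapIn.card_trace_ne_of_finrank_eq_five : #(trace C p) ≠ q := by
  intro hcardp
  obtain ⟨P, hP⟩ : (trace C p).Nonempty := card_pos.1 (by omega)
  obtain ⟨hPC, hPp⟩ := mem_trace.1 hP
  have count := sum_flats_card_trace h.isPointCap.finrank_eq_one hpD hp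
  have solid_le : ∀ X ∈ flats p D 4, #(trace C X) + 2 * q ≤
      q ^ 2 + 21 + if q ^ 2 + 22 ≤ #(trace C X) + 2 * q then 3 * q else 0 := by
    intro X hX
    obtain ⟨hpX, -, hX4⟩ := mem_flats.1 hX
    have := h.isPointCap.card_trace_le_of_finrank_eq_four hPC (hPp.trans hpX) hX4
    split_ifs <;> omega
  have large_le := Nat.mul_le_mul_right (3 * q)
    (h.card_filter_large_le_eight hD hpD hp hq hcard hcardp)
  have hsum := sum_le_sum solid_le
  simp only [sum_add_distrib, ← sum_filter, sum_const, smul_eq_mul] at hsum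
  rw [h.trace_eq, hcardp] at count
  simp only [Nat.reduceAdd, card_flats_of_finrank_add_two hpD hp hD] at count hsum
  nlinarith

end FourSpace

section Bridge

variable {F : Type*} [Field F] {n : ℕ} {K : Set (PGPoint F n)} {P Q R : PGPoint F n}
variable {W N : Submodule F (Fin (n + 1) → F)}

theorem coll3_iff_le_sup (h : P ≠ Q) : Coll3 P Q R ↔ R.submodule ≤ P.submodule ⊔ Q.submodule := by
  have hline := finrank_sup_of_ne P.finrank_submodule Q.finrank_submodule
    (Projectivization.submodule_injective.ne h)
  rw [Coll3, ← sup_eq_left (a := P.submodule ⊔ Q.submodule)]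
  constructor
  · intro hle
    exact (Submodule.eq_of_le_of_finrank_le le_sup_left (hle.trans hline.ge)).symm
  · intro he
    rw [he, hline]

theorem exists_submodule_eq (hN : finrank F N = 1) : ∃ P : PGPoint F n, P.submodule = N :=
  ⟨Projectivization.mk'' N hN, Projectivization.submodule_mk'' N hN⟩

variable [Finite F]

open Classical in
/-- The points of `K`, as one-dimensional subspaces. -/
noncomputable def pointFinset (K : Set (PGPoint F n)) : Finset (Submodule F (Fin (n + 1) → F)) :=
  K.toFinite.toFinset.image Projectivization.submodule

theorem mem_pointFinset : N ∈ pointFinset K ↔ ∃ P ∈ K, P.submodule = N := by simp [pointFinset]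

theorem submodule_mem_pointFinset : P.submodule ∈ pointFinset K ↔ P ∈ K := by
  simp [mem_pointFinset, Projectivization.submodule_injective.eq_iff]

theorem card_pointFinset (K : Set (PGPoint F n)) : #(pointFinset K) = K.ncard := by
  classical
  rw [pointFinset, card_image_of_injective _ Projectivization.submodule_injective,
    Set.ncard_eq_toFinset_card K]

theorem trace_pointFinset : trace (pointFinset K) W = pointFinset (ptsIn W ∩ K) := by
  ext N
  simp only [mem_trace, mem_pointFinset, ptsIn, Set.mem_inter_iff, Set.mem_ofPred_eq]
  exact ⟨fun ⟨⟨P, hP, he⟩, hle⟩ => ⟨P, ⟨he ▸ hle, hP⟩, he⟩,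
    fun ⟨P, ⟨hle, hP⟩, he⟩ => ⟨⟨P, hP, he⟩, he ▸ hle⟩⟩

theorem pointFinset_insert [DecidableEq (Submodule F (Fin (n + 1) → F))] :
    pointFinset (insert P K) = insert P.submodule (pointFinset K) := by
  ext N
  simp [mem_pointFinset, eq_comm]

theorem isPointCap_pointFinset_iff : IsPointCap (pointFinset K) ↔ IsCap K := by
  have inj : Function.Injective (Projectivization.submodule : PGPoint F n → _) :=
    Projectivization.submodule_injective
  constructor
  · intro h P hP Q hQ R hR hPQ hPR hQR hcoll
    exact h.not_le_sup _ (submodule_mem_pointFinset.2 hP) _ (submodule_mem_pointFinset.2 hQ) _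
      (submodule_mem_pointFinset.2 hR) (inj.ne hPQ) (inj.ne hPR) (inj.ne hQR)
      ((coll3_iff_le_sup hPQ).1 hcoll)
  · refine fun h => ⟨fun N hN => ?_, fun N hN M hM L hL hNM hNL hML hle => ?_⟩
    · obtain ⟨P, -, rfl⟩ := mem_pointFinset.1 hN
      exact P.finrank_submodule
    · obtain ⟨P, hP, rfl⟩ := mem_pointFinset.1 hN
      obtain ⟨Q, hQ, rfl⟩ := mem_pointFinset.1 hM
      obtain ⟨R, hR, rfl⟩ := mem_pointFinset.1 hL
      have hPQ : P ≠ Q := ne_of_apply_ne Projectivization.submodule hNM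
      exact h P hP Q hQ R hR hPQ (ne_of_apply_ne Projectivization.submodule hNL)
        (ne_of_apply_ne _ hML) ((coll3_iff_le_sup hPQ).2 hle)

theorem isCompleteCapIn_pointFinset (hK : IsCompleteCap K) :
    IsCompleteCapIn (pointFinset K) ⊤ := by
  classical
  have hcap := isPointCap_pointFinset_iff.2 hK.1
  refine ⟨hcap, fun _ _ => le_top, fun N hN _ hNK => ?_⟩
  by_contra! hchord
  obtain ⟨P, rfl⟩ := exists_submodule_eq hN
  refine hK.2 P (fun hP => hNK (submodule_mem_pointFinset.2 hP)) ?_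
  rw [← isPointCap_pointFinset_iff, pointFinset_insert]
  exact hcap.insert hN fun A hA B hB hAB hle => hchord A B ⟨hA, hB, hAB, hN, hNK, hle⟩

end Bridge

theorem le_of_sqrt_bound {q k : ℕ} (hq : 169 ≤ q)
    (hk : (q : ℝ) ^ 3 - 2 * (q : ℝ) ^ 2 + 3 * (q : ℝ) * √q + 8 * (q : ℝ) - 9 * √q - 6 ≤ k) :
    q ^ 3 + 44 * q ≤ k + 2 * q ^ 2 := by
  have hq_real : (169 : ℝ) ≤ q := by exact_mod_cast hq
  have hsqrt : (13 : ℝ) ≤ √q := Real.le_sqrt_of_sq_le (by linarith)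
  have hprod : 0 ≤ (√q - 13) * (3 * (q : ℝ) - 9) := mul_nonneg (by linarith) (by linarith)
  have : (q : ℝ) ^ 3 + 44 * q ≤ k + 2 * (q : ℝ) ^ 2 := by linarith
  exact_mod_cast this

end ProjectiveCap

theorem stmt2_general (F : Type*) [Field F] [Fintype F] (q : ℕ) (hcard : Fintype.card F = q)
    (hqeven : Even q) (hq : 32 ≤ q)
    (K : Set (PGPoint F 4)) (hK : IsCompleteCap K) (hk : q ^ 3 + 44 * q ≤ K.ncard + 2 * q ^ 2) :
    ¬ ∃ W : Submodule F (Fin 5 → F), Module.finrank F W = 3 ∧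
      (ptsIn W ∩ K).ncard = q := by
  rintro ⟨W, hW, hWK⟩
  subst hcard
  have := ringChar.of_eq (FiniteField.even_card_iff_char_two.2 (Nat.even_iff.1 hqeven))
  refine (ProjectiveCap.isCompleteCapIn_pointFinset hK).card_trace_ne_of_finrank_eq_five
    (by simp) le_top hW hq ?_ ?_
  · rwa [ProjectiveCap.card_pointFinset]
  · rw [ProjectiveCap.trace_pointFinset, ProjectiveCap.card_pointFinset, hWK]

theorem stmt2 (F : Type*) [Field F] [Fintype F] (q : ℕ) (hcard : Fintype.card F = q)
    (hqeven : Even q) (hq : 2048 ≤ q)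
    (K : Set (PGPoint F 4)) (hK : IsCompleteCap K)
    (hk : (q : ℝ) ^ 3 - 2 * (q : ℝ) ^ 2 + 3 * (q : ℝ) * Real.sqrt q + 8 * (q : ℝ) - 9 * Real.sqrt q - 6 ≤ (K.ncard : ℝ)) :
    ¬ ∃ W : Submodule F (Fin 5 → F), Module.finrank F W = 3 ∧
      (ptsIn W ∩ K).ncard = q :=
  stmt2_general F q hcard hqeven (by omega) K hK (ProjectiveCap.le_of_sqrt_bound (by omega) hk)
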